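/- arXiv:2008.01256 — 2 statements merged into one kernel-verified Lean document; each statement's English description precedes it below -/
import Mathlib

section
/- Suppose that a linear functional L* on ℝ[x] is nonnegative on the quadratic module generated by a set G of polynomials whose quadratic module is Archimedean, L*(g) = 1 and L*(g - g*) ≥ 0 for some polynomial g and constant g* > 0, and L*(p(x,y)) ≤ 0 as a polynomial in y for all y ∈ Y, L*(ψ_j) ≤ 0 for j = 1,...,s. Then L* admits a representing nonnegative Borel measure ν on ℝ^m with ∫ dν > 0, and the point (∫x_1dν, ..., ∫x_m dν)/(∫dν) belongs to the feasible set K = {x : ψ_j(x) ≤ 0 ∀j, p(x,y) ≤ 0 ∀y ∈ Y}, provided ψ_j and p(·,y) are convex for all j and y ∈ Y. -/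
open MvPolynomial MeasureTheory

/-- The quadratic module generated by a finite family `G` of polynomials. -/
def QuadraticModule {m κ : ℕ} (G : Fin κ → MvPolynomial (Fin m) ℝ) :
    Set (MvPolynomial (Fin m) ℝ) :=
  {q | ∃ (σ0 : MvPolynomial (Fin m) ℝ) (σ : Fin κ → MvPolynomial (Fin m) ℝ),
    IsSumSq σ0 ∧ (∀ j, IsSumSq (σ j)) ∧ q = σ0 + ∑ j, σ j * G j}

/-!
A linear functional `L ≠ 0` that is nonnegative on an Archimedean quadratic module `M` is, after
normalization, a point of the compact convex set of states of `M`, and a linear coordinate on this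
set attains its minimum at an extreme point. Extreme states are multiplicative: if `a` and `1 - a`
lie in `M`, an extreme state `ℓ` is a convex combination of the states `x ↦ ℓ (a * x) / ℓ a` and
`x ↦ ℓ ((1 - a) * x) / ℓ (1 - a)`. Their positivity on `M` rests on the iteration `u ↦ u - u ^ 2`,
which writes `a` as a sum of squares up to an error that is negligible for `ℓ`. Since the
multiplicative states of a polynomial ring are evaluations, `L f ≥ 0` as soon as `f ≥ 0` on the
compact set where `M` is nonnegative; this is the dual form of Putinar's Positivstellensatz. Riesz
extension and Riesz-Markov-Kakutani then give the measure (Haviland's theorem for compact sets), and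
Jensen's inequality gives feasibility of its normalized barycenter.
-/

open Filter Topology

section QuadraticModules

variable {A : Type*} [CommRing A] {M : Set A}

/-- Quadratic modules of a commutative ring, not necessarily finitely generated. -/
structure IsQuadraticModule (M : Set A) : Prop where
  one_mem : 1 ∈ M
  add_mem {a b : A} : a ∈ M → b ∈ M → a + b ∈ M
  sq_mul_mem (q : A) {a : A} : a ∈ M → q ^ 2 * a ∈ M

lemma isQuadraticModule_quadraticModule {m κ : ℕ} (G : Fin κ → MvPolynomial (Fin m) ℝ) :
    IsQuadraticModule (QuadraticModule G) where
  one_mem := ⟨1, 0, IsSumSq.one, fun _ => IsSumSq.zero, by simp⟩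
  add_mem := by
    rintro _ _ ⟨σ₀, σ, hσ₀, hσ, rfl⟩ ⟨τ₀, τ, hτ₀, hτ, rfl⟩
    refine ⟨σ₀ + τ₀, σ + τ, hσ₀.add hτ₀, fun j => (hσ j).add (hτ j), ?_⟩
    simp only [Pi.add_apply, add_mul, Finset.sum_add_distrib]
    ring
  sq_mul_mem := by
    rintro q _ ⟨σ₀, σ, hσ₀, hσ, rfl⟩
    have hq : IsSumSq (q ^ 2) := (IsSquare.sq q).isSumSq
    refine ⟨q ^ 2 * σ₀, fun j => q ^ 2 * σ j, hq.mul hσ₀, fun j => hq.mul (hσ j), ?_⟩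
    simp only [mul_add, Finset.mul_sum, mul_assoc]

/-- The iterates of `u ↦ u - u ^ 2`. Telescoping gives `a = ∑ k < n, u k ^ 2 + u n`, which replaces
the square root of `a`. -/
def subSqSeq (a : A) : ℕ → A
  | 0 => a
  | n + 1 => subSqSeq a n - subSqSeq a n ^ 2

namespace IsQuadraticModule

lemma sq_mem (hM : IsQuadraticModule M) (a : A) : a ^ 2 ∈ M := by
  simpa using hM.sq_mul_mem a hM.one_mem

lemma zero_mem (hM : IsQuadraticModule M) : 0 ∈ M := by
  simpa using hM.sq_mem 0

lemma sub_sq_mem (hM : IsQuadraticModule M) {a : A} (ha : a ∈ M) (ha' : 1 - a ∈ M) :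
    a - a ^ 2 ∈ M := by
  convert hM.add_mem (hM.sq_mul_mem a ha') (hM.sq_mul_mem (1 - a) ha) using 1
  ring

lemma subSqSeq_mem (hM : IsQuadraticModule M) {a : A} (ha : a ∈ M) (ha' : 1 - a ∈ M) (n : ℕ) :
    subSqSeq a n ∈ M ∧ 1 - subSqSeq a n ∈ M := by
  induction n with
  | zero => exact ⟨ha, ha'⟩
  | succ n ih =>
    rw [subSqSeq, ← sub_add]
    exact ⟨hM.sub_sq_mem ih.1 ih.2, hM.add_mem ih.2 (hM.sq_mem _)⟩

variable [Algebra ℝ A]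

lemma smul_mem (hM : IsQuadraticModule M) {c : ℝ} (hc : 0 ≤ c) {a : A} (ha : a ∈ M) :
    c • a ∈ M := by
  have h := hM.sq_mul_mem (algebraMap ℝ A √c) ha
  rwa [← map_pow, Real.sq_sqrt hc, ← Algebra.smul_def] at h

lemma algebraMap_add_mem_of_le (hM : IsQuadraticModule M) {c d : ℝ} (hcd : c ≤ d) {a : A}
    (ha : algebraMap ℝ A c + a ∈ M) : algebraMap ℝ A d + a ∈ M := by
  convert hM.add_mem (hM.smul_mem (sub_nonneg.2 hcd) hM.one_mem) ha using 1
  rw [← Algebra.algebraMap_eq_smul_one, map_sub]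
  ring

/-- The elements that are bounded with respect to a quadratic module. Bounding the square makes
closure under products immediate. -/
def boundedSubalgebra (hM : IsQuadraticModule M) : Subalgebra ℝ A where
  carrier := {f | ∃ N : ℝ, 0 ≤ N ∧ algebraMap ℝ A N - f ^ 2 ∈ M}
  algebraMap_mem' r := ⟨r ^ 2, sq_nonneg r, by simpa using hM.zero_mem⟩
  add_mem' := by
    rintro f g ⟨N, hN, hf⟩ ⟨K, hK, hg⟩
    refine ⟨2 * (N + K), by positivity, ?_⟩
    convert hM.add_mem (hM.smul_mem zero_le_two (hM.add_mem hf hg)) (hM.sq_mem (f - g)) using 1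
    simp only [Algebra.smul_def, map_mul, map_add, map_ofNat]
    ring
  mul_mem' := by
    rintro f g ⟨N, hN, hf⟩ ⟨K, hK, hg⟩
    refine ⟨N * K, by positivity, ?_⟩
    convert hM.add_mem (hM.smul_mem hN hg) (hM.sq_mul_mem g hf) using 1
    rw [Algebra.smul_def, map_mul]
    ring

lemma mem_boundedSubalgebra_of_sub_sq_mem (hM : IsQuadraticModule M) {f : A} {N : ℝ}
    (hf : algebraMap ℝ A N - f ^ 2 ∈ M) : f ∈ hM.boundedSubalgebra := by
  refine ⟨max N 0, le_max_right N 0, ?_⟩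
  rw [sub_eq_add_neg] at hf ⊢
  exact hM.algebraMap_add_mem_of_le (le_max_left N 0) hf

lemma exists_algebraMap_sub_mem (hM : IsQuadraticModule M) {f : A}
    (hf : f ∈ hM.boundedSubalgebra) : ∃ c : ℝ, algebraMap ℝ A c - f ∈ M := by
  obtain ⟨N, -, hN⟩ := hf
  refine ⟨2⁻¹ * (N + 1), ?_⟩
  convert hM.smul_mem (inv_nonneg.2 zero_le_two) (hM.add_mem hN (hM.sq_mem (f - 1))) using 1
  have hhalf : algebraMap ℝ A 2⁻¹ * 2 = 1 := by
    rw [← map_ofNat (algebraMap ℝ A) 2, ← map_mul, inv_mul_cancel₀ two_ne_zero, map_one]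
  simp only [Algebra.smul_def, map_mul, map_add, map_one]
  linear_combination f * hhalf

end IsQuadraticModule

end QuadraticModules

section States

variable {A : Type*} [CommRing A] [Algebra ℝ A] {M : Set A}

/-- The constants form an order unit for `M`; for quadratic modules of polynomials in finitely
many variables this is equivalent to `N - ‖x‖ ^ 2 ∈ M` for some `N`. -/
def IsArchimedeanModule (M : Set A) : Prop :=
  ∀ f : A, ∃ c : ℝ, algebraMap ℝ A c - f ∈ M

lemma IsArchimedeanModule.exists_gt_mem (hArch : IsArchimedeanModule M)
    (hM : IsQuadraticModule M) (f : A) (r : ℝ) :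
    ∃ c > r, algebraMap ℝ A c + f ∈ M ∧ algebraMap ℝ A c - f ∈ M := by
  obtain ⟨c₁, h₁⟩ := hArch (-f)
  obtain ⟨c₂, h₂⟩ := hArch f
  rw [sub_neg_eq_add] at h₁
  rw [sub_eq_add_neg] at h₂
  refine ⟨max (max c₁ c₂) (r + 1), by simp, ?_, ?_⟩
  · exact hM.algebraMap_add_mem_of_le (by simp) h₁
  · rw [sub_eq_add_neg]
    exact hM.algebraMap_add_mem_of_le (by simp) h₂

/-- The normalized linear functionals that are nonnegative on `M`, as functions on `A`, so that
they carry the topology of pointwise convergence. -/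
def states (M : Set A) : Set (A → ℝ) :=
  {ℓ | ℓ ∈ Set.range ((⇑) : (A →ₗ[ℝ] ℝ) → A → ℝ) ∧ ℓ 1 = 1 ∧ ∀ a ∈ M, 0 ≤ ℓ a}

lemma map_algebraMap_of_map_one {L : A →ₗ[ℝ] ℝ} (hL : L 1 = 1) (c : ℝ) :
    L (algebraMap ℝ A c) = c := by
  rw [Algebra.algebraMap_eq_smul_one, map_smul, hL, smul_eq_mul, mul_one]

lemma IsArchimedeanModule.isCompact_states (hArch : IsArchimedeanModule M) :
    IsCompact (states M) := by
  choose c hc using hArch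
  refine (isCompact_univ_pi fun f => isCompact_Icc (a := -c (-f)) (b := c f)).of_isClosed_subset
    ?_ ?_
  · simp only [states, Set.ofPred_and, Set.ofPred_forall]
    exact (LinearMap.isClosed_range_coe _ _ _).inter <|
      (isClosed_eq (by fun_prop) (by fun_prop)).inter <|
      isClosed_iInter fun a => isClosed_iInter fun _ => isClosed_le (by fun_prop) (by fun_prop)
  · rintro _ ⟨⟨L, rfl⟩, hL1, hL⟩ f -
    have hlower := hL _ (hc (-f))
    have hupper := hL _ (hc f)
    rw [map_sub, map_algebraMap_of_map_one hL1] at hlower hupper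
    rw [map_neg] at hlower
    exact ⟨by linarith, by linarith⟩

lemma sq_map_mul_le {L : A →ₗ[ℝ] ℝ} (hL : ∀ q, 0 ≤ L (q ^ 2)) (a b : A) :
    L (a * b) ^ 2 ≤ L (a ^ 2) * L (b ^ 2) := by
  simpa [sq] using LinearMap.BilinForm.apply_sq_le_of_symm ((LinearMap.mul ℝ A).compr₂ L)
    (fun q => by simpa [sq] using hL q) ⟨fun x y => by simp [mul_comm x]⟩ a b

lemma IsQuadraticModule.tendsto_map_sq_subSqSeq (hM : IsQuadraticModule M) {L : A →ₗ[ℝ] ℝ}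
    (hL : ∀ q ∈ M, 0 ≤ L q) {a : A} (ha : a ∈ M) (ha' : 1 - a ∈ M) :
    Tendsto (fun n => L (subSqSeq a n ^ 2)) atTop (𝓝 0) := by
  refine (summable_of_sum_range_le (c := L a) (fun n => hL _ (hM.sq_mem _))
    fun n => ?_).tendsto_atTop_zero
  have htelescope : ∑ k ∈ Finset.range n, L (subSqSeq a k ^ 2) = L a - L (subSqSeq a n) := by
    rw [show L a = L (subSqSeq a 0) from rfl, ← Finset.sum_range_sub' fun k => L (subSqSeq a k)]
    refine Finset.sum_congr rfl fun k _ => ?_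
    rw [subSqSeq, map_sub, sub_sub_cancel]
  linarith [hL _ (hM.subSqSeq_mem ha ha' n).1]

lemma IsQuadraticModule.map_mul_nonneg (hM : IsQuadraticModule M) {L : A →ₗ[ℝ] ℝ}
    (hL : ∀ q ∈ M, 0 ≤ L q) {a b : A} (ha : a ∈ M) (ha' : 1 - a ∈ M) (hb : b ∈ M) :
    0 ≤ L (a * b) := by
  have hlim : Tendsto (fun n => L (subSqSeq a n * b)) atTop (𝓝 0) := by
    refine squeeze_zero_norm (fun n => Real.abs_le_sqrt
      (sq_map_mul_le (fun q => hL _ (hM.sq_mem q)) _ b)) ?_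
    simpa using ((hM.tendsto_map_sq_subSqSeq hL ha ha').mul_const (L (b ^ 2))).sqrt
  have hanti : Antitone fun n => L (subSqSeq a n * b) :=
    antitone_nat_of_succ_le fun n => by
      rw [subSqSeq, sub_mul, map_sub]
      exact sub_le_self _ (hL _ (hM.sq_mul_mem _ hb))
  exact hanti.le_of_tendsto hlim 0

lemma IsQuadraticModule.inv_mul_map_mul_mem_states (hM : IsQuadraticModule M) {L : A →ₗ[ℝ] ℝ}
    (hL : ∀ q ∈ M, 0 ≤ L q) {a : A} (ha : a ∈ M) (ha' : 1 - a ∈ M) (hpos : 0 < L a) :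
    (fun x => (L a)⁻¹ * L (a * x)) ∈ states M := by
  refine ⟨⟨(L a)⁻¹ • L ∘ₗ LinearMap.mulLeft ℝ a, rfl⟩, ?_, fun b hb => ?_⟩
  · simp only [mul_one, inv_mul_cancel₀ hpos.ne']
  · exact mul_nonneg (inv_nonneg.2 hpos.le) (hM.map_mul_nonneg hL ha ha' hb)

lemma IsQuadraticModule.map_mul_of_mem_extremePoints_states_of_mem (hM : IsQuadraticModule M)
    {L : A →ₗ[ℝ] ℝ} (hL : ⇑L ∈ (states M).extremePoints ℝ) {a : A} (ha : a ∈ M) (ha' : 1 - a ∈ M)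
    (hpos : 0 < L a) (hpos' : 0 < L (1 - a)) (x : A) : L (a * x) = L a * L x := by
  obtain ⟨⟨-, hL1, hLM⟩, hext⟩ := hL
  have hcomb : L a • (fun x => (L a)⁻¹ * L (a * x)) +
      L (1 - a) • (fun x => (L (1 - a))⁻¹ * L ((1 - a) * x)) = L := by
    ext x
    simp only [Pi.add_apply, Pi.smul_apply, smul_eq_mul, mul_inv_cancel_left₀ hpos.ne',
      mul_inv_cancel_left₀ hpos'.ne']
    rw [← map_add, ← add_mul, add_sub_cancel, one_mul]
  have hstate : (fun x => (L a)⁻¹ * L (a * x)) = L :=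
    hext (hM.inv_mul_map_mul_mem_states hLM ha ha' hpos)
      (hM.inv_mul_map_mul_mem_states hLM ha' (by rwa [sub_sub_cancel]) hpos')
      ⟨L a, L (1 - a), hpos, hpos', by rw [← map_add, add_sub_cancel, hL1], hcomb⟩
  rw [← congrFun hstate x, mul_inv_cancel_left₀ hpos.ne']

lemma IsQuadraticModule.map_mul_of_mem_extremePoints_states (hM : IsQuadraticModule M)
    (hArch : IsArchimedeanModule M) {L : A →ₗ[ℝ] ℝ} (hL : ⇑L ∈ (states M).extremePoints ℝ)
    (f x : A) : L (f * x) = L f * L x := by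
  obtain ⟨c, hc, hadd, hsub⟩ := hArch.exists_gt_mem hM f |L f|
  obtain ⟨hlower, hupper⟩ := abs_lt.1 hc
  have hcpos : 0 < 2 * c := by linarith
  have hL1 : L 1 = 1 := hL.1.2.1
  set a : A := (2 * c)⁻¹ • (algebraMap ℝ A c + f) with ha
  have ha' : 1 - a = (2 * c)⁻¹ • (algebraMap ℝ A c - f) := by
    have hone : (1 : A) = (2 * c)⁻¹ • algebraMap ℝ A (2 * c) := by
      rw [Algebra.algebraMap_eq_smul_one, inv_smul_smul₀ hcpos.ne']
    rw [ha, hone, ← smul_sub, two_mul, map_add, add_sub_add_left_eq_sub]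
  have hmul := hM.map_mul_of_mem_extremePoints_states_of_mem hL
    (hM.smul_mem (inv_nonneg.2 hcpos.le) hadd) (ha' ▸ hM.smul_mem (inv_nonneg.2 hcpos.le) hsub)
    (by
      rw [map_smul, map_add, map_algebraMap_of_map_one hL1]
      exact mul_pos (inv_pos.2 hcpos) (by linarith))
    (by
      rw [ha', map_smul, map_sub, map_algebraMap_of_map_one hL1]
      exact mul_pos (inv_pos.2 hcpos) (by linarith)) x
  simp only [smul_mul_assoc, map_smul, add_mul, map_add, map_algebraMap_of_map_one hL1,
    ← Algebra.smul_def, smul_eq_mul, mul_assoc] at hmul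
  linarith [mul_left_cancel₀ (inv_ne_zero hcpos.ne') hmul]

lemma IsArchimedeanModule.exists_mem_extremePoints_states_le (hArch : IsArchimedeanModule M)
    {ℓ : A → ℝ} (hℓ : ℓ ∈ states M) (f : A) :
    ∃ ℓ' ∈ (states M).extremePoints ℝ, ℓ' f ≤ ℓ f := by
  have hcompact := hArch.isCompact_states
  let e : StrongDual ℝ (A → ℝ) := -ContinuousLinearMap.proj f
  have hexposed := ContinuousLinearMap.toExposed.isExposed (l := e) (A := states M)
  obtain ⟨ℓ₀, hℓ₀, hmax⟩ := hcompact.exists_isMaxOn ⟨ℓ, hℓ⟩ e.continuous.continuousOn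
  obtain ⟨ℓ', hℓ'⟩ := (hexposed.isCompact hcompact).extremePoints_nonempty ⟨ℓ₀, hℓ₀, hmax⟩
  exact ⟨ℓ', hexposed.isExtreme.extremePoints_subset_extremePoints hℓ',
    neg_le_neg_iff.1 (hℓ'.1.2 ℓ hℓ)⟩

lemma IsQuadraticModule.exists_algHom_le (hM : IsQuadraticModule M) (hArch : IsArchimedeanModule M)
    {ℓ : A → ℝ} (hℓ : ℓ ∈ states M) (f : A) :
    ∃ φ : A →ₐ[ℝ] ℝ, (∀ a ∈ M, 0 ≤ φ a) ∧ φ f ≤ ℓ f := by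
  obtain ⟨ℓ', hext, hle⟩ := hArch.exists_mem_extremePoints_states_le hℓ f
  obtain ⟨⟨L, rfl⟩, hL1, hL⟩ := hext.1
  exact ⟨AlgHom.ofLinearMap L hL1 (hM.map_mul_of_mem_extremePoints_states hArch hext), hL, hle⟩

lemma IsQuadraticModule.map_one_pos (hM : IsQuadraticModule M) (hArch : IsArchimedeanModule M)
    {L : A →ₗ[ℝ] ℝ} (hL : ∀ q ∈ M, 0 ≤ L q) (hL0 : L ≠ 0) : 0 < L 1 := by
  refine (hL 1 hM.one_mem).lt_of_ne' fun hL1 => hL0 ?_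
  have hnonpos (f : A) : L f ≤ 0 := by
    obtain ⟨c, hc⟩ := hArch f
    simpa [Algebra.algebraMap_eq_smul_one, hL1] using hL _ hc
  ext f
  exact (hnonpos f).antisymm (by simpa using hnonpos (-f))

theorem IsQuadraticModule.map_nonneg_of_forall_algHom_nonneg (hM : IsQuadraticModule M)
    (hArch : IsArchimedeanModule M) {L : A →ₗ[ℝ] ℝ} (hL : ∀ q ∈ M, 0 ≤ L q) {f : A}
    (hf : ∀ φ : A →ₐ[ℝ] ℝ, (∀ a ∈ M, 0 ≤ φ a) → 0 ≤ φ f) : 0 ≤ L f := by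
  obtain rfl | hL0 := eq_or_ne L 0
  · exact le_rfl
  have hpos := inv_pos.2 (hM.map_one_pos hArch hL hL0)
  have hstate : ⇑((L 1)⁻¹ • L) ∈ states M :=
    ⟨⟨_, rfl⟩, inv_mul_cancel₀ (inv_pos.1 hpos).ne', fun a ha => mul_nonneg hpos.le (hL a ha)⟩
  obtain ⟨φ, hφ, hle⟩ := hM.exists_algHom_le hArch hstate f
  exact nonneg_of_mul_nonneg_right ((hf φ hφ).trans hle) hpos

end States

section Haviland

lemma exists_comp_eq_nonneg_of_nonneg {X V : Type*} [TopologicalSpace X] [CompactSpace X]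
    [AddCommGroup V] [Module ℝ V] (r : V →ₗ[ℝ] C(X, ℝ)) {e : V} (he : r e = 1)
    (L : V →ₗ[ℝ] ℝ) (hL : ∀ v, 0 ≤ r v → 0 ≤ L v) :
    ∃ Λ : C(X, ℝ) →ₗ[ℝ] ℝ, Λ ∘ₗ r = L ∧ ∀ h, 0 ≤ h → 0 ≤ Λ h := by
  have hker : L ∈ r.ker.dualAnnihilator := by
    rw [Submodule.mem_dualAnnihilator]
    intro v hv
    rw [LinearMap.mem_ker] at hv
    exact le_antisymm (by simpa using hL (-v) (by simp [hv])) (hL v hv.ge)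
  rw [← LinearMap.range_dualMap_eq_dualAnnihilator_ker] at hker
  obtain ⟨F, rfl⟩ := hker
  obtain ⟨Λ, hΛF, hΛ⟩ := riesz_extension (PointedCone.positive ℝ C(X, ℝ))
    ⟨r.range, F.domRestrict r.range⟩
    (by
      rintro ⟨_, v, rfl⟩ hv
      exact hL v hv)
    (fun h => by
      refine ⟨⟨r (‖h‖ • e), LinearMap.mem_range_self r _⟩, fun x => ?_⟩
      have hx := neg_le_of_abs_le (h.norm_coe_le_norm x)
      simpa [he] using neg_le_iff_add_nonneg'.1 hx)
  exact ⟨Λ, LinearMap.ext fun v => hΛF ⟨r v, LinearMap.mem_range_self r v⟩, hΛ⟩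

lemma exists_measure_integral_eq_of_nonneg {X : Type*} [TopologicalSpace X] [CompactSpace X]
    [T2Space X] [MeasurableSpace X] [BorelSpace X] (Λ : C(X, ℝ) →ₗ[ℝ] ℝ)
    (hΛ : ∀ h, 0 ≤ h → 0 ≤ Λ h) :
    ∃ μ : Measure X, IsFiniteMeasure μ ∧ ∀ h, Λ h = ∫ x, h x ∂μ := by
  let Λ' : CompactlySupportedContinuousMap X ℝ →ₚ[ℝ] ℝ :=
    PositiveLinearMap.mk₀
      { toFun := fun h => Λ (h : C(X, ℝ))
        map_add' := fun h k => map_add Λ (h : C(X, ℝ)) (k : C(X, ℝ))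
        map_smul' := fun c h => map_smul Λ c (h : C(X, ℝ)) } fun h hh => hΛ h hh
  exact ⟨RealRMK.rieszMeasure Λ', inferInstance, fun h => (RealRMK.integral_rieszMeasure Λ'
    (CompactlySupportedContinuousMap.continuousMapEquiv h)).symm⟩

variable {σ : Type*}

/-- The restriction of polynomial functions to `K`, the multivariate counterpart of
`Polynomial.toContinuousMapOn`. -/
noncomputable def restrictPolynomial (K : Set (σ → ℝ)) : MvPolynomial σ ℝ →ₗ[ℝ] C(K, ℝ) where
  toFun q := ⟨fun x => eval (x : σ → ℝ) q, q.continuous_eval.comp continuous_subtype_val⟩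
  map_add' q r := by ext; simp
  map_smul' c q := by ext; simp

theorem exists_measure_of_nonneg_on_isCompact [Countable σ] {K : Set (σ → ℝ)} (hK : IsCompact K)
    (L : MvPolynomial σ ℝ →ₗ[ℝ] ℝ) (hL : ∀ q, (∀ x ∈ K, 0 ≤ eval x q) → 0 ≤ L q) :
    ∃ ν : Measure (σ → ℝ), IsFiniteMeasure ν ∧ (∀ᵐ x ∂ν, x ∈ K) ∧
      (∀ q : MvPolynomial σ ℝ, Integrable (fun x => eval x q) ν) ∧
      ∀ q : MvPolynomial σ ℝ, L q = ∫ x, eval x q ∂ν := by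
  have : CompactSpace K := isCompact_iff_compactSpace.1 hK
  obtain ⟨Λ, rfl, hΛ⟩ := exists_comp_eq_nonneg_of_nonneg (restrictPolynomial K) (e := 1)
    (by ext; simp [restrictPolynomial]) L fun q hq => hL q fun x hx => hq ⟨x, hx⟩
  obtain ⟨μ, hfin, hμ⟩ := exists_measure_integral_eq_of_nonneg Λ hΛ
  have hemb := MeasurableEmbedding.subtype_coe hK.measurableSet
  refine ⟨μ.map Subtype.val, inferInstance, ?_, fun q => ?_, fun q => ?_⟩
  · exact hemb.ae_map_iff.2 (ae_of_all _ Subtype.property)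
  · rw [hemb.integrable_map_iff]
    exact (restrictPolynomial K q).continuous.integrable_of_hasCompactSupport
      (HasCompactSupport.of_compactSpace _)
  · rw [hemb.integral_map]
    exact hμ (restrictPolynomial K q)

end Haviland

section Putinar

variable {σ : Type*} {M : Set (MvPolynomial σ ℝ)}

lemma IsQuadraticModule.isArchimedeanModule_of_sub_sum_sq_mem [Fintype σ] (hM : IsQuadraticModule M)
    {N : ℝ} (hN : C N - ∑ i, X i ^ 2 ∈ M) : IsArchimedeanModule M := by
  classical
  have hX (i : σ) : X i ∈ hM.boundedSubalgebra := by
    refine hM.mem_boundedSubalgebra_of_sub_sq_mem (N := N) ?_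
    have hrest : ∑ j ∈ Finset.univ.erase i, (X j : MvPolynomial σ ℝ) ^ 2 ∈ M :=
      Finset.sum_induction _ (· ∈ M) (fun _ _ => hM.add_mem) hM.zero_mem fun j _ => hM.sq_mem _
    convert hM.add_mem hN hrest using 1
    rw [← Finset.add_sum_erase _ _ (Finset.mem_univ i), algebraMap_eq]
    ring
  have htop : hM.boundedSubalgebra = ⊤ := by
    rw [eq_top_iff, ← adjoin_range_X]
    exact Algebra.adjoin_le (Set.range_subset_iff.2 hX)
  exact fun f => hM.exists_algebraMap_sub_mem (htop ▸ Algebra.mem_top)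

/-- The set on which all polynomials of `M` are nonnegative. -/
def nonnegLocus (M : Set (MvPolynomial σ ℝ)) : Set (σ → ℝ) :=
  {x | ∀ q ∈ M, 0 ≤ eval x q}

lemma IsArchimedeanModule.isCompact_nonnegLocus (hArch : IsArchimedeanModule M) :
    IsCompact (nonnegLocus M) := by
  choose c hc using hArch
  refine (isCompact_univ_pi fun i =>
    isCompact_Icc (a := -c (-X i)) (b := c (X i))).of_isClosed_subset ?_ fun x hx i _ => ?_
  · simp only [nonnegLocus, Set.ofPred_forall]
    exact isClosed_iInter fun q => isClosed_iInter fun _ =>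
      isClosed_le continuous_const q.continuous_eval
  · have hlower := hx _ (hc (-X i))
    have hupper := hx _ (hc (X i))
    simp only [algebraMap_eq, map_sub, map_neg, eval_C, eval_X] at hlower hupper
    exact ⟨by linarith, by linarith⟩

lemma algHom_apply_eq_eval (φ : MvPolynomial σ ℝ →ₐ[ℝ] ℝ) (q : MvPolynomial σ ℝ) :
    φ q = eval (fun i => φ (X i)) q := by
  rw [← coe_aeval_eq_eval]
  exact DFunLike.congr_fun (aeval_unique φ) q

theorem IsQuadraticModule.map_nonneg_of_nonneg_on_nonnegLocus (hM : IsQuadraticModule M)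
    (hArch : IsArchimedeanModule M) {L : MvPolynomial σ ℝ →ₗ[ℝ] ℝ} (hL : ∀ q ∈ M, 0 ≤ L q)
    {f : MvPolynomial σ ℝ} (hf : ∀ x ∈ nonnegLocus M, 0 ≤ eval x f) : 0 ≤ L f := by
  refine hM.map_nonneg_of_forall_algHom_nonneg hArch hL fun φ hφ => ?_
  rw [algHom_apply_eq_eval φ f]
  exact hf _ fun q hq => algHom_apply_eq_eval φ q ▸ hφ q hq

end Putinar

section Barycenter

lemma map_barycenter_le_of_convexOn {ι : Type*} [Finite ι] {ν : Measure (ι → ℝ)}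
    [IsFiniteMeasure ν] [NeZero ν] {f : (ι → ℝ) → ℝ} (hf : ConvexOn ℝ Set.univ f)
    (hcoord : ∀ i, Integrable (fun x => x i) ν)
    (hfν : Integrable f ν) :
    f (fun i => (∫ x, x i ∂ν) / ∫ _, (1 : ℝ) ∂ν) ≤ (∫ x, f x ∂ν) / ∫ _, (1 : ℝ) ∂ν := by
  have := Fintype.ofFinite ι
  have hcont : ContinuousOn f Set.univ := hf.continuousOn isOpen_univ
  have hJensen := hf.map_average_le (f := id) hcont isClosed_univ (by simp)
    (Integrable.of_eval hcoord) hfν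
  have hbary : ⨍ x, id x ∂ν = fun i => (∫ x, x i ∂ν) / ∫ _, (1 : ℝ) ∂ν := by
    ext i
    simp_rw [average_eq, id, Pi.smul_apply, eval_integral hcoord, integral_const, smul_eq_mul,
      mul_one, div_eq_inv_mul]
  rw [hbary, average_eq] at hJensen
  simpa [div_eq_inv_mul] using hJensen

end Barycenter

theorem representing_measure_feasible_general {σ : Type*} [Finite σ]
    {M : Set (MvPolynomial σ ℝ)} (hM : IsQuadraticModule M) (hArch : IsArchimedeanModule M)
    {L : MvPolynomial σ ℝ →ₗ[ℝ] ℝ} (hL : ∀ q ∈ M, 0 ≤ L q) (hL0 : L ≠ 0) :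
    ∃ ν : Measure (σ → ℝ), (∀ᵐ x ∂ν, x ∈ nonnegLocus M) ∧
      (∀ q : MvPolynomial σ ℝ, Integrable (fun x => eval x q) ν) ∧
      (∀ q : MvPolynomial σ ℝ, L q = ∫ x, eval x q ∂ν) ∧
      0 < (∫ _, (1 : ℝ) ∂ν) ∧
      ∀ f : MvPolynomial σ ℝ, ConvexOn ℝ Set.univ (fun x => eval x f) → L f ≤ 0 →
        eval (fun i => (∫ x, x i ∂ν) / ∫ _, (1 : ℝ) ∂ν) f ≤ 0 := by
  obtain ⟨ν, hfin, hsupp, hint, hrep⟩ := exists_measure_of_nonneg_on_isCompact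
    hArch.isCompact_nonnegLocus L fun _ => hM.map_nonneg_of_nonneg_on_nonnegLocus hArch hL
  have hmass : 0 < ∫ _, (1 : ℝ) ∂ν := by
    simpa only [hrep, map_one] using hM.map_one_pos hArch hL hL0
  have : NeZero ν := ⟨by
    rintro rfl
    simp at hmass⟩
  refine ⟨ν, hsupp, hint, hrep, hmass, fun f hf hLf => ?_⟩
  have hJensen := map_barycenter_le_of_convexOn hf (fun i => by simpa using hint (X i)) (hint f)
  exact hJensen.trans (div_nonpos_of_nonpos_of_nonneg (hrep f ▸ hLf) hmass.le)

/-- A linear functional nonnegative on an Archimedean quadratic module, normalized by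
`L(g) = 1` with `L(g - g*) ≥ 0`, `g* > 0`, and satisfying the dual feasibility
constraints, admits a representing measure `ν` with `∫ dν > 0` whose normalized
barycenter is feasible. -/
theorem representing_measure_feasible (m n s κ : ℕ)
    (G : Fin κ → MvPolynomial (Fin m) ℝ)
    (harch : ∃ N : ℝ, (C N - ∑ i : Fin m, X i ^ 2) ∈ QuadraticModule G)
    (Lstar : MvPolynomial (Fin m) ℝ →ₗ[ℝ] ℝ)
    (hLpos : ∀ q ∈ QuadraticModule G, 0 ≤ Lstar q)
    (g : MvPolynomial (Fin m) ℝ) (gstar : ℝ) (hgstar : 0 < gstar)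
    (hLg : Lstar g = 1) (hLgg : 0 ≤ Lstar (g - C gstar))
    (Y : Set (Fin n → ℝ)) (p : MvPolynomial (Fin m ⊕ Fin n) ℝ)
    (ψ : Fin s → MvPolynomial (Fin m) ℝ)
    (hψconv : ∀ j, ConvexOn ℝ Set.univ fun x => eval x (ψ j))
    (hpconv : ∀ y ∈ Y, ConvexOn ℝ Set.univ fun x =>
        eval x (aeval (Sum.elim X fun j => C (y j)) p))
    (hLp : ∀ y ∈ Y, Lstar (aeval (Sum.elim X fun j => C (y j)) p) ≤ 0)
    (hLψ : ∀ j, Lstar (ψ j) ≤ 0) :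
    ∃ ν : Measure (Fin m → ℝ),
      (∀ q : MvPolynomial (Fin m) ℝ, Integrable (fun x => eval x q) ν) ∧
      (∀ q : MvPolynomial (Fin m) ℝ, Lstar q = ∫ x, eval x q ∂ν) ∧
      0 < (∫ x, (1 : ℝ) ∂ν) ∧
      (fun i => (∫ x, x i ∂ν) / (∫ x, (1 : ℝ) ∂ν)) ∈
        {x : Fin m → ℝ | (∀ j, eval x (ψ j) ≤ 0) ∧
          ∀ y ∈ Y, eval x (aeval (Sum.elim X fun j => C (y j)) p) ≤ 0} := by
  obtain ⟨N, hN⟩ := harch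
  have hM := isQuadraticModule_quadraticModule G
  have hL0 : Lstar ≠ 0 := fun h => by simp [h] at hLg
  obtain ⟨ν, -, hint, hrep, hmass, hconv⟩ := representing_measure_feasible_general hM
    (hM.isArchimedeanModule_of_sub_sum_sq_mem hN) hLpos hL0
  exact ⟨ν, hint, hrep, hmass, fun j => hconv _ (hψconv j) (hLψ j),
    fun y hy => hconv _ (hpconv y hy) (hLp y hy)⟩
end

section
/- Let q(x) ∈ ℝ[x] with K = {x ∈ ℝ^m : q(x) ≥ 0} compact. If h ∈ ℝ[x] is nonnegative on K, has only finitely many zeros on K, each lying in the interior of K, and the Hessian ∇²h is positive definite at each of these zeros, then h = σ_0 + σ_1·q for some sums of squares σ_0, σ_1 ∈ Σ²[x]. -/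
open MvPolynomial

/-!
Let `T = Σ² + Σ² q` be the preordering generated by `q`, let `Z` be the set of zeros of `h` on `K`
and let `I` be the vanishing ideal of `Z`. Since `Z` is defined by `q ≥ 0` and `-h² ≥ 0`, the real
Nullstellensatz gives `Iᴺ ⊆ T - h² T` for some `N`. At a point of `Z` the positive definite Hessian
makes `h` a sum of squares up to arbitrarily high order, by completing squares, and the Chinese
remainder theorem glues these local sums of squares to `s` with `h - s ∈ Iᴺ`. Hence `h = t + c h²`
with `t ∈ T`, that is `h (1 - c h) = t`, so `1 - c h ≥ 0` on `K`. By Stone–Weierstrass there are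
polynomials `σ, τ > 0` on `K` with `σ h + τ (1 - c h) = 1`. They lie in `T` by Schmüdgen's
Positivstellensatz, and therefore so does `h = σ h² + τ t`.

Both Stellensätze come from a transfer principle: a polynomial system of sign conditions solvable in
an extension of `ℝ` whose one-variable polynomials satisfy the intermediate value theorem is already
solvable in `ℝ`.
-/

section Preordering

variable {A : Type*} [CommRing A] {T : Subsemiring A}

/-- The preordering generated by the constraints `G`, allowed to contain `-1`. In general, a
preordering is encoded below as a subsemiring `T` with `Subsemiring.sumSq A ≤ T`. -/
def preordering (G : Set A) : Subsemiring A :=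
  Subsemiring.sumSq A ⊔ Subsemiring.closure G

theorem sumSq_le_preordering (G : Set A) : Subsemiring.sumSq A ≤ preordering G :=
  le_sup_left

theorem subset_preordering (G : Set A) : G ⊆ preordering G :=
  Subsemiring.subset_closure.trans (SetLike.coe_subset_coe.2 le_sup_right)

theorem sq_mem_of_sumSq_le (hT : Subsemiring.sumSq A ≤ T) (a : A) : a ^ 2 ∈ T :=
  hT (Subsemiring.mem_sumSq.2 (IsSquare.sq a).isSumSq)

theorem even_pow_mem_of_sumSq_le (hT : Subsemiring.sumSq A ≤ T) (a : A) (k : ℕ) :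
    a ^ (2 * k) ∈ T := by
  rw [pow_mul]
  exact pow_mem (sq_mem_of_sumSq_le hT a) k

theorem mem_sup_closure_singleton (hT : Subsemiring.sumSq A ≤ T) {a x : A} :
    a ∈ T ⊔ Subsemiring.closure {x} ↔ ∃ s ∈ T, ∃ t ∈ T, a = s + t * x := by
  let S : Subsemiring A :=
    { carrier := {a | ∃ s ∈ T, ∃ t ∈ T, a = s + t * x}
      zero_mem' := ⟨0, zero_mem T, 0, zero_mem T, by ring⟩
      one_mem' := ⟨1, one_mem T, 0, zero_mem T, by ring⟩
      add_mem' := by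
        rintro _ _ ⟨s, hs, t, ht, rfl⟩ ⟨s', hs', t', ht', rfl⟩
        exact ⟨_, add_mem hs hs', _, add_mem ht ht', by ring⟩
      mul_mem' := by
        rintro _ _ ⟨s, hs, t, ht, rfl⟩ ⟨s', hs', t', ht', rfl⟩
        exact ⟨s * s' + t * t' * x ^ 2,
          add_mem (mul_mem hs hs') (mul_mem (mul_mem ht ht') (sq_mem_of_sumSq_le hT x)),
          _, add_mem (mul_mem hs ht') (mul_mem ht hs'), by ring⟩ }
  constructor
  · have hTS : T ≤ S := fun s hs => ⟨s, hs, 0, zero_mem T, by ring⟩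
    have hxS : Subsemiring.closure {x} ≤ S :=
      Subsemiring.closure_le.2 (Set.singleton_subset_iff.2 ⟨0, zero_mem T, 1, one_mem T, by ring⟩)
    exact fun ha => sup_le hTS hxS ha
  · rintro ⟨s, hs, t, ht, rfl⟩
    have hx : x ∈ T ⊔ Subsemiring.closure {x} :=
      (le_sup_right : _ ≤ T ⊔ _) (Subsemiring.subset_closure rfl)
    exact add_mem (le_sup_left (a := T) hs) (mul_mem (le_sup_left (a := T) ht) hx)

theorem mem_preordering_insert {G : Set A} {a x : A} :
    a ∈ preordering (insert x G) ↔ ∃ s ∈ preordering G, ∃ t ∈ preordering G, a = s + t * x := by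
  rw [preordering, Set.insert_eq, Set.union_comm, Subsemiring.closure_union, ← sup_assoc]
  exact mem_sup_closure_singleton (sumSq_le_preordering G)

theorem mem_preordering_singleton {a q : A} :
    a ∈ preordering {q} ↔ ∃ s t : A, IsSumSq s ∧ IsSumSq t ∧ a = s + t * q := by
  simp only [preordering, mem_sup_closure_singleton le_rfl, Subsemiring.mem_sumSq]
  grind

theorem exists_maximal_sumSq_le_of_forall_neg_pow_notMem (hT : Subsemiring.sumSq A ≤ T) {f : A}
    (hf : ∀ k, -f ^ (2 * k) ∉ T) :
    ∃ P, T ≤ P ∧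
      Maximal (fun P : Subsemiring A => Subsemiring.sumSq A ≤ P ∧ ∀ k, -f ^ (2 * k) ∉ P) P := by
  refine zorn_le_nonempty₀ {P | Subsemiring.sumSq A ≤ P ∧ ∀ k, -f ^ (2 * k) ∉ P}
    (fun c hc hchain P hP => ⟨sSup c, ⟨(hc hP).1.trans (le_sSup hP), fun k hk => ?_⟩,
      fun _ => le_sSup⟩) T ⟨hT, hf⟩
  obtain ⟨Q, hQ, hkQ⟩ := (Subsemiring.mem_sSup_of_directedOn ⟨P, hP⟩ hchain.directedOn).1 hk
  exact (hc hQ).2 k hkQ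

theorem exists_isOrdering_ge (hT : Subsemiring.sumSq A ≤ T) {f : A}
    (hf : ∀ k, -f ^ (2 * k) ∉ T) :
    ∃ (P : RingPreordering A) (_ : P.IsOrdering), T ≤ P.toSubsemiring ∧ f ∉ P.support := by
  obtain ⟨P, hTP, ⟨hP, hfP⟩, hmax⟩ := exists_maximal_sumSq_le_of_forall_neg_pow_notMem hT hf
  have exists_of_notMem : ∀ z, z ∉ P → ∃ k, ∃ s ∈ P, ∃ t ∈ P, -f ^ (2 * k) = s + t * z := by
    intro z hz
    by_contra! hcon
    have hle := hmax (y := P ⊔ Subsemiring.closure {z}) ⟨hP.trans le_sup_left, fun k hk => by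
      obtain ⟨s, hs, t, ht, h⟩ := (mem_sup_closure_singleton hP).1 hk
      exact hcon k s hs t ht h⟩ le_sup_left
    exact hz (hle ((mem_sup_closure_singleton hP).2
      ⟨0, zero_mem P, 1, one_mem P, by rw [zero_add, one_mul]⟩))
  let O : RingPreordering A :=
    { P with
      mem_of_isSquare' := fun hx => hP (Subsemiring.mem_sumSq.2 hx.isSumSq)
      neg_one_notMem' := fun h => hfP 0 (by simpa using h) }
  have hO : O.IsOrdering := by
    refine RingPreordering.isOrdering_iff.2 fun x y hxy => ?_
    by_contra! hcon
    obtain ⟨k, s, hs, t, ht, h1⟩ := exists_of_notMem x hcon.1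
    obtain ⟨l, s', hs', t', ht', h2⟩ := exists_of_notMem y hcon.2
    refine hfP (k + l) ?_
    have : -f ^ (2 * (k + l)) =
        s * f ^ (2 * l) + f ^ (2 * k) * s' + s * s' + t * t' * -(x * y) := by
      linear_combination (f ^ (2 * l) + s') * h1 - (t * x) * h2
    rw [this]
    exact add_mem (add_mem (add_mem (mul_mem hs (even_pow_mem_of_sumSq_le hP f l))
      (mul_mem (even_pow_mem_of_sumSq_le hP f k) hs')) (mul_mem hs hs'))
      (mul_mem (mul_mem ht ht') hxy)
  refine ⟨O, hO, hTP, fun h => hfP 1 ?_⟩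
  have hneg : f * -f ∈ P := mul_mem h.1 h.2
  rwa [mul_one, pow_two, ← mul_neg]

end Preordering

section OrderCone

variable {Ω : Type*} [Field Ω] {S : Subsemiring Ω}

/-- The nonnegative elements of an ordering of the subring `S - S` of `Ω`. -/
structure IsOrderCone (S : Subsemiring Ω) : Prop where
  eq_zero_of_neg_mem : ∀ {a}, a ∈ S → -a ∈ S → a = 0
  sub_mem_or_sub_mem : ∀ {a b}, a ∈ S → b ∈ S → a - b ∈ S ∨ b - a ∈ S

/-- The fractions of elements of `S`. -/
def fractionCone (S : Subsemiring Ω) : Subsemiring Ω where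
  carrier := {x | ∃ a ∈ S, ∃ b ∈ S, b ≠ 0 ∧ x * b = a}
  zero_mem' := ⟨0, zero_mem S, 1, one_mem S, one_ne_zero, by ring⟩
  one_mem' := ⟨1, one_mem S, 1, one_mem S, one_ne_zero, by ring⟩
  add_mem' := by
    rintro x y ⟨a, ha, b, hb, hb0, rfl⟩ ⟨a', ha', b', hb', hb0', rfl⟩
    exact ⟨_, add_mem (mul_mem ha hb') (mul_mem ha' hb), _, mul_mem hb hb',
      mul_ne_zero hb0 hb0', by ring⟩
  mul_mem' := by
    rintro x y ⟨a, ha, b, hb, hb0, rfl⟩ ⟨a', ha', b', hb', hb0', rfl⟩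
    exact ⟨_, mul_mem ha ha', _, mul_mem hb hb', mul_ne_zero hb0 hb0', by ring⟩

theorem le_fractionCone (S : Subsemiring Ω) : S ≤ fractionCone S :=
  fun x hx => ⟨x, hx, 1, one_mem S, one_ne_zero, mul_one x⟩

theorem IsOrderCone.fractionCone (hS : IsOrderCone S) : IsOrderCone (fractionCone S) where
  eq_zero_of_neg_mem := by
    rintro x ⟨a, ha, b, hb, hb0, h⟩ ⟨a', ha', b', hb', hb0', h'⟩
    have hneg : -(a * b') ∈ S := by
      have : -(a * b') = a' * b := by linear_combination b * h' + b' * h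
      exact this ▸ mul_mem ha' hb
    have ha0 : a = 0 := (mul_eq_zero.1
      (hS.eq_zero_of_neg_mem (mul_mem ha hb') hneg)).resolve_right hb0'
    exact (mul_eq_zero.1 (h.trans ha0)).resolve_right hb0
  sub_mem_or_sub_mem := by
    rintro x y ⟨a, ha, b, hb, hb0, rfl⟩ ⟨a', ha', b', hb', hb0', rfl⟩
    exact (hS.sub_mem_or_sub_mem (mul_mem ha hb') (mul_mem ha' hb)).imp
      (fun h => ⟨_, h, _, mul_mem hb hb', mul_ne_zero hb0 hb0', by ring⟩)
      (fun h => ⟨_, h, _, mul_mem hb hb', mul_ne_zero hb0 hb0', by ring⟩)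

theorem isOrderCone_map {A : Type*} [CommRing A] {P : RingPreordering A} [P.IsOrdering]
    {j : A →+* Ω} (hj : RingHom.ker j = P.support) : IsOrderCone (P.toSubsemiring.map j) where
  eq_zero_of_neg_mem := by
    rintro _ ⟨a, ha, rfl⟩ ⟨b, hb, hab⟩
    have hsupp : a + b ∈ P.support := by
      rw [← hj, RingHom.mem_ker, map_add, hab, add_neg_cancel]
    have hneg : -a ∈ P := by
      have := add_mem (show b ∈ P from hb) hsupp.2
      rwa [show b + -(a + b) = -a by ring] at this
    have : a ∈ RingHom.ker j := hj ▸ ⟨ha, hneg⟩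
    exact this
  sub_mem_or_sub_mem := by
    rintro _ _ ⟨a, _, rfl⟩ ⟨b, _, rfl⟩
    exact (mem_or_neg_mem P (a - b)).imp (fun h => ⟨_, h, map_sub _ _ _⟩)
      (fun h => ⟨_, h, by rw [neg_sub, map_sub]⟩)

theorem IsOrderCone.exists_maximal_ge (hS : IsOrderCone S) :
    ∃ Q, S ≤ Q ∧ Maximal (IsOrderCone (Ω := Ω)) Q := by
  refine zorn_le_nonempty₀ {Q | IsOrderCone Q} (fun c hc hchain Q₀ hQ₀ =>
    ⟨sSup c, ?_, fun _ => le_sSup⟩) S hS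
  have mem_sSup {a} : a ∈ sSup c ↔ ∃ Q ∈ c, a ∈ Q :=
    Subsemiring.mem_sSup_of_directedOn ⟨Q₀, hQ₀⟩ hchain.directedOn
  have exists_common {a b} (ha : a ∈ sSup c) (hb : b ∈ sSup c) : ∃ Q ∈ c, a ∈ Q ∧ b ∈ Q := by
    obtain ⟨Q, hQ, haQ⟩ := mem_sSup.1 ha
    obtain ⟨Q', hQ', hbQ'⟩ := mem_sSup.1 hb
    rcases hchain.total hQ hQ' with h | h
    exacts [⟨Q', hQ', h haQ, hbQ'⟩, ⟨Q, hQ, haQ, h hbQ'⟩]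
  constructor
  · intro a ha hb
    obtain ⟨Q, hQ, h1, h2⟩ := exists_common ha hb
    exact (hc hQ).eq_zero_of_neg_mem h1 h2
  · intro a b ha hb
    obtain ⟨Q, hQ, h1, h2⟩ := exists_common ha hb
    exact ((hc hQ).sub_mem_or_sub_mem h1 h2).imp (mem_sSup.2 ⟨Q, hQ, ·⟩) (mem_sSup.2 ⟨Q, hQ, ·⟩)

theorem inv_mem_of_maximal_isOrderCone (hS : Maximal IsOrderCone S) {a : Ω} (ha : a ∈ S) :
    a⁻¹ ∈ S := by
  rcases eq_or_ne a 0 with rfl | h0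
  · rwa [inv_zero]
  · exact hS.2 hS.1.fractionCone (le_fractionCone S) ⟨1, one_mem S, a, ha, h0, inv_mul_cancel₀ h0⟩

/-- The ordered subfield of `Ω` whose nonnegative elements form the maximal order cone `S`. -/
def coneSubfield (hS : Maximal IsOrderCone S) : Subfield Ω where
  carrier := {a | a ∈ S ∨ -a ∈ S}
  zero_mem' := Or.inl (zero_mem S)
  one_mem' := Or.inl (one_mem S)
  neg_mem' := by
    rintro a (h | h)
    exacts [Or.inr (by rwa [neg_neg]), Or.inl h]
  add_mem' := by
    rintro a b (ha | ha) (hb | hb)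
    · exact Or.inl (add_mem ha hb)
    · simpa only [Set.mem_ofPred_eq, sub_neg_eq_add, ← neg_add', add_comm]
        using hS.1.sub_mem_or_sub_mem ha hb
    · simpa only [Set.mem_ofPred_eq, sub_neg_eq_add, ← neg_add', add_comm]
        using hS.1.sub_mem_or_sub_mem hb ha
    · exact Or.inr (by simpa only [neg_add] using add_mem ha hb)
  mul_mem' := by
    rintro a b (ha | ha) (hb | hb)
    · exact Or.inl (mul_mem ha hb)
    · exact Or.inr (by simpa only [mul_neg] using mul_mem ha hb)
    · exact Or.inr (by simpa only [neg_mul] using mul_mem ha hb)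
    · exact Or.inl (by simpa only [neg_mul_neg] using mul_mem ha hb)
  inv_mem' := by
    rintro a (h | h)
    · exact Or.inl (inv_mem_of_maximal_isOrderCone hS h)
    · exact Or.inr (by simpa only [inv_neg] using inv_mem_of_maximal_isOrderCone hS h)

theorem exists_linearOrder_coneSubfield (hS : Maximal IsOrderCone S) :
    ∃ _ : LinearOrder (coneSubfield hS), IsStrictOrderedRing (coneSubfield hS) ∧
      ∀ a : coneSubfield hS, 0 ≤ a ↔ (a : Ω) ∈ S := by
  classical
  let cone : RingCone (coneSubfield hS) :=
    { S.comap (coneSubfield hS).subtype with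
      eq_zero_of_mem_of_neg_mem' := fun h h' => Subtype.ext (hS.1.eq_zero_of_neg_mem h h') }
  have : HasMemOrNegMem cone := ⟨fun a => a.2⟩
  let : DecidablePred (· ∈ cone) := Classical.decPred _
  let o : LinearOrder (coneSubfield hS) := LinearOrder.mkOfAddGroupCone cone
  have : @IsOrderedRing (coneSubfield hS) _ o.toPartialOrder := IsOrderedRing.mkOfCone cone
  refine ⟨o, IsOrderedRing.toIsStrictOrderedRing _, fun a => ?_⟩
  change a - 0 ∈ cone ↔ _
  rw [sub_zero]
  rfl

end OrderCone

section PolynomialIVT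

open Polynomial

/-- The intermediate value property for polynomials, a form of real closedness. -/
def HasPolyIVT (R : Type*) [Field R] [LinearOrder R] : Prop :=
  ∀ (f : R[X]) (a b : R), a < b → f.eval a < 0 → 0 < f.eval b → ∃ c ∈ Set.Ioo a b, f.eval c = 0

section Irreducible

variable {R : Type*} [Field R] [LinearOrder R] [IsStrictOrderedRing R] {f : R[X]} {a b c : R}

theorem not_isUnit_of_eval_neg_of_eval_pos (ha : f.eval a < 0) (hb : 0 < f.eval b) :
    ¬ IsUnit f := by
  intro h
  obtain ⟨c, _, rfl⟩ := Polynomial.isUnit_iff.1 h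
  rw [Polynomial.eval_C] at ha hb
  exact lt_asymm ha hb

theorem mem_Ioo_of_irreducible_of_eval_eq_zero (hf : Irreducible f) (hab : a < b)
    (ha : f.eval a < 0) (hb : 0 < f.eval b) (hc : f.eval c = 0) : c ∈ Set.Ioo a b := by
  obtain ⟨g, rfl⟩ := dvd_iff_isRoot.2 hc
  obtain ⟨d, _, rfl⟩ := Polynomial.isUnit_iff.1
    ((hf.isUnit_or_isUnit rfl).resolve_left (not_isUnit_X_sub_C c))
  simp only [Polynomial.eval_mul, Polynomial.eval_sub, Polynomial.eval_X, Polynomial.eval_C]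
    at ha hb
  constructor <;>
  · by_contra! h
    rcases le_total 0 d <;> nlinarith

theorem exists_mem_Ioo_eval_mul_eq_zero {u v : R[X]} (ha : (u * v).eval a < 0)
    (hb : 0 < (u * v).eval b)
    (hu : u.eval a * u.eval b < 0 → ∃ c ∈ Set.Ioo a b, u.eval c = 0)
    (hv : v.eval a * v.eval b < 0 → ∃ c ∈ Set.Ioo a b, v.eval c = 0) :
    ∃ c ∈ Set.Ioo a b, (u * v).eval c = 0 := by
  simp only [Polynomial.eval_mul] at ha hb ⊢
  have hprod : (u.eval a * u.eval b) * (v.eval a * v.eval b) < 0 := by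
    rw [mul_mul_mul_comm]
    exact mul_neg_of_neg_of_pos ha hb
  rcases mul_neg_iff.1 hprod with ⟨-, h⟩ | ⟨h, -⟩
  · obtain ⟨c, hc, hc0⟩ := hv h
    exact ⟨c, hc, by rw [hc0, mul_zero]⟩
  · obtain ⟨c, hc, hc0⟩ := hu h
    exact ⟨c, hc, by rw [hc0, zero_mul]⟩

theorem hasPolyIVT_of_irreducible
    (h : ∀ (f : R[X]) (a b : R), Irreducible f → f.eval a < 0 → 0 < f.eval b →
      (∀ g : R[X], g.natDegree < f.natDegree → g.eval a < 0 → 0 < g.eval b → ∃ c, g.eval c = 0) →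
      ∃ c, f.eval c = 0) : HasPolyIVT R := by
  intro f
  induction hn : f.natDegree using Nat.strong_induction_on generalizing f with
  | _ n ih =>
    subst hn
    intro a b hab ha hb
    have hf0 : f ≠ 0 := by
      rintro rfl
      simp at ha
    have hfu := not_isUnit_of_eval_neg_of_eval_pos ha hb
    by_cases hirr : Irreducible f
    · obtain ⟨c, hc⟩ := h f a b hirr ha hb fun g hg hga hgb =>
        (ih _ hg g rfl a b hab hga hgb).imp fun _ => And.right
      exact ⟨c, mem_Ioo_of_irreducible_of_eval_eq_zero hirr hab ha hb hc, hc⟩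
    · obtain ⟨u, v, rfl, hu, hv⟩ : ∃ u v, f = u * v ∧ ¬ IsUnit u ∧ ¬ IsUnit v := by
        by_contra! hcon
        exact hirr ⟨hfu, fun u v huv => or_iff_not_imp_left.2 (hcon u v huv)⟩
      have hu0 := left_ne_zero_of_mul hf0
      have hv0 := right_ne_zero_of_mul hf0
      have hud := natDegree_pos_iff_degree_pos.2 (degree_pos_of_ne_zero_of_nonunit hu0 hu)
      have hvd := natDegree_pos_iff_degree_pos.2 (degree_pos_of_ne_zero_of_nonunit hv0 hv)
      rw [natDegree_mul hu0 hv0] at ih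
      have exists_root : ∀ w : R[X], w.natDegree < u.natDegree + v.natDegree →
          w.eval a * w.eval b < 0 → ∃ c ∈ Set.Ioo a b, w.eval c = 0 := by
        intro w hw hwab
        rcases mul_neg_iff.1 hwab with ⟨h1, h2⟩ | ⟨h1, h2⟩
        · simpa using ih _ hw (-w) (natDegree_neg w) a b hab (by simpa using h1) (by simpa using h2)
        · exact ih _ hw w rfl a b hab h1 h2
      exact exists_mem_Ioo_eval_mul_eq_zero ha hb (exists_root u (by omega))
        (exists_root v (by omega))

end Irreducible

section WeightedSquares

variable {R K : Type*} [Field R] [LinearOrder R] [IsStrictOrderedRing R] [Field K] [Algebra R K]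

variable (R K) in
/-- The nonnegative multiples of squares in an extension `K` of the ordered field `R`; their sums
form the preordering `(weightedSquares R K).subsemiringClosure`. -/
def weightedSquares : Submonoid K where
  carrier := {x | ∃ c : R, 0 ≤ c ∧ ∃ y : K, x = algebraMap R K c * y ^ 2}
  one_mem' := ⟨1, zero_le_one, 1, by rw [map_one, one_pow, one_mul]⟩
  mul_mem' := by
    rintro _ _ ⟨c, hc, y, rfl⟩ ⟨d, hd, z, rfl⟩
    exact ⟨c * d, mul_nonneg hc hd, y * z, by rw [map_mul]; ring⟩

theorem sumSq_le_subsemiringClosure_weightedSquares :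
    Subsemiring.sumSq K ≤ (weightedSquares R K).subsemiringClosure := by
  rw [← Subsemiring.closure_isSquare, Subsemiring.closure_le]
  rintro _ ⟨y, rfl⟩
  exact AddSubmonoid.subset_closure ⟨1, zero_le_one, y, by rw [map_one, one_mul, pow_two]⟩

theorem algebraMap_mem_subsemiringClosure_weightedSquares {c : R} (hc : 0 ≤ c) :
    algebraMap R K c ∈ (weightedSquares R K).subsemiringClosure :=
  AddSubmonoid.subset_closure ⟨c, hc, 1, by rw [one_pow, mul_one]⟩

variable {f : R[X]}

theorem exists_nonneg_natDegree_le_of_mem_weightedSquares [hf : Fact (Irreducible f)]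
    {t : AdjoinRoot f} (ht : t ∈ (weightedSquares R (AdjoinRoot f)).subsemiringClosure) :
    ∃ s : R[X], AdjoinRoot.mk f s = t ∧ (∀ y, 0 ≤ s.eval y) ∧
      s.natDegree ≤ 2 * (f.natDegree - 1) := by
  induction ht using AddSubmonoid.closure_induction with
  | mem x hx =>
    obtain ⟨c, hc, y, rfl⟩ := hx
    obtain ⟨g, rfl⟩ := AdjoinRoot.mk_surjective y
    have hmod : AdjoinRoot.mk f (g % f) = AdjoinRoot.mk f g :=
      AdjoinRoot.mk_eq_mk.2 ⟨-(g / f), by linear_combination EuclideanDomain.div_add_mod g f⟩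
    refine ⟨Polynomial.C c * (g % f) ^ 2, ?_, fun y => ?_, ?_⟩
    · rw [map_mul, map_pow, hmod]
      rfl
    · simp only [Polynomial.eval_mul, Polynomial.eval_C, Polynomial.eval_pow]
      positivity
    · have := natDegree_mod_lt g hf.out.natDegree_pos.ne'
      calc (Polynomial.C c * (g % f) ^ 2).natDegree ≤ 2 * (g % f).natDegree :=
            (natDegree_C_mul_le _ _).trans natDegree_pow_le
        _ ≤ 2 * (f.natDegree - 1) := by omega
  | zero => exact ⟨0, by simp⟩
  | add x y _ _ hx hy =>
    obtain ⟨s, rfl, h1, h2⟩ := hx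
    obtain ⟨s', rfl, h1', h2'⟩ := hy
    exact ⟨s + s', map_add _ _ _, fun y => by simpa using add_nonneg (h1 y) (h1' y),
      (natDegree_add_le _ _).trans (max_le h2 h2')⟩

theorem neg_one_notMem_weightedSquares [hf : Fact (Irreducible f)] {a b : R}
    (ha : f.eval a < 0) (hb : 0 < f.eval b)
    (hroot : ∀ g : R[X], g.natDegree < f.natDegree → g.eval a < 0 → 0 < g.eval b →
      ∃ c, g.eval c = 0) :
    (-1 : AdjoinRoot f) ∉ (weightedSquares R (AdjoinRoot f)).subsemiringClosure := by
  intro hmem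
  obtain ⟨s, hs, hpos, hdeg⟩ := exists_nonneg_natDegree_le_of_mem_weightedSquares hmem
  obtain ⟨g, hg⟩ : f ∣ s + 1 := AdjoinRoot.mk_eq_zero.1 (by rw [map_add, hs, map_one]; ring)
  have hval : ∀ y, 0 < f.eval y * g.eval y := fun y => by
    rw [← Polynomial.eval_mul, ← hg, Polynomial.eval_add, Polynomial.eval_one]
    linarith [hpos y]
  have hg0 : g ≠ 0 := by
    rintro rfl
    simpa using hval a
  have hd := congrArg natDegree hg
  rw [natDegree_mul hf.out.ne_zero hg0, ← Polynomial.C_1, natDegree_add_C] at hd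
  have := hf.out.natDegree_pos
  obtain ⟨c, hc⟩ := hroot g (by omega) (neg_of_mul_pos_right (hval a) ha.le)
    (pos_of_mul_pos_right (hval b) hb.le)
  simpa [hc] using hval c

end WeightedSquares

end PolynomialIVT

section RealClosure

open Polynomial

variable {Ω : Type*} [Field Ω] {S : Subsemiring Ω}

theorem mem_coneSubfield_of_ringHom {K : Type*} [Field K] (hS : Maximal IsOrderCone S) (i : K →+* Ω)
    (Q : RingPreordering K) [HasMemOrNegMem Q] (hSQ : S ≤ Q.toSubsemiring.map i) (x : K) :
    i x ∈ coneSubfield hS := by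
  have : Q.IsOrdering := {}
  have hker : RingHom.ker i = Q.support := by
    rw [RingPreordering.support_eq_bot, (RingHom.injective_iff_ker_eq_bot i).1 i.injective]
  have hle : Q.toSubsemiring.map i ≤ S := hS.2 (isOrderCone_map hker) hSQ
  rcases mem_or_neg_mem Q x with h | h
  · exact Or.inl (hle ⟨x, h, rfl⟩)
  · exact Or.inr (hle ⟨-x, h, map_neg i x⟩)

theorem hasPolyIVT_coneSubfield [IsAlgClosed Ω] (hS : Maximal IsOrderCone S)
    [LinearOrder (coneSubfield hS)] [IsStrictOrderedRing (coneSubfield hS)]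
    (hnonneg : ∀ a : coneSubfield hS, 0 ≤ a ↔ (a : Ω) ∈ S) : HasPolyIVT (coneSubfield hS) := by
  refine hasPolyIVT_of_irreducible fun f a b hirr ha hb hroot => ?_
  have : Fact (Irreducible f) := ⟨hirr⟩
  have hneg := neg_one_notMem_weightedSquares ha hb hroot
  obtain ⟨Q, _, hTQ, -⟩ := exists_isOrdering_ge (f := (1 : AdjoinRoot f))
    sumSq_le_subsemiringClosure_weightedSquares (by simpa only [one_pow, forall_const] using hneg)
  obtain ⟨θ, hθ⟩ := IsAlgClosed.exists_aeval_eq_zero Ω f (degree_pos_of_irreducible hirr).ne'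
  let i : AdjoinRoot f →+* Ω := AdjoinRoot.lift (algebraMap (coneSubfield hS) Ω) θ hθ
  have hSQ : S ≤ Q.toSubsemiring.map i := fun x hx =>
    ⟨AdjoinRoot.of f ⟨x, Or.inl hx⟩,
      hTQ (algebraMap_mem_subsemiringClosure_weightedSquares ((hnonneg _).2 hx)),
      AdjoinRoot.lift_of hθ⟩
  have hmem : θ ∈ coneSubfield hS := by
    have hroot : i (AdjoinRoot.root f) = θ := AdjoinRoot.lift_root hθ
    exact hroot ▸ mem_coneSubfield_of_ringHom hS i Q hSQ (AdjoinRoot.root f)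
  refine ⟨⟨θ, hmem⟩, (algebraMap (coneSubfield hS) Ω).injective ?_⟩
  rw [map_zero, ← hθ]
  exact hom_eval₂ f (RingHom.id _) (algebraMap (coneSubfield hS) Ω) ⟨θ, hmem⟩

universe u

theorem exists_algebraicClosure_ringHom_ker_eq {A : Type u} [CommRing A] (I : Ideal A) [I.IsPrime] :
    ∃ (Ω : Type u) (_ : Field Ω) (_ : IsAlgClosed Ω) (j : A →+* Ω), RingHom.ker j = I := by
  let Ω := AlgebraicClosure (FractionRing (A ⧸ I))
  let j : (A ⧸ I) →+* Ω := (algebraMap (FractionRing (A ⧸ I)) Ω).comp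
    (algebraMap (A ⧸ I) (FractionRing (A ⧸ I)))
  have hj : Function.Injective j :=
    (algebraMap (FractionRing (A ⧸ I)) Ω).injective.comp
      (IsFractionRing.injective (A ⧸ I) (FractionRing (A ⧸ I)))
  refine ⟨Ω, inferInstance, inferInstance, j.comp (Ideal.Quotient.mk I), ?_⟩
  rw [RingHom.ker_comp_of_injective _ hj, Ideal.mk_ker]

theorem exists_ringHom_hasPolyIVT {A : Type u} [CommRing A] {T : Subsemiring A}
    (hT : Subsemiring.sumSq A ≤ T) {f : A} (hf : ∀ k, -f ^ (2 * k) ∉ T) :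
    ∃ (R : Type u) (_ : Field R) (_ : LinearOrder R) (_ : IsStrictOrderedRing R) (φ : A →+* R),
      HasPolyIVT R ∧ (∀ a ∈ T, 0 ≤ φ a) ∧ φ f ≠ 0 := by
  obtain ⟨P, _, hTP, hfP⟩ := exists_isOrdering_ge hT hf
  obtain ⟨Ω, _, _, j, hj⟩ := exists_algebraicClosure_ringHom_ker_eq P.support
  obtain ⟨S, hPS, hS⟩ := (isOrderCone_map hj).exists_maximal_ge
  obtain ⟨o, _, hnonneg⟩ := exists_linearOrder_coneSubfield hS
  have hjS : ∀ a ∈ P, j a ∈ S := fun a ha => hPS ⟨a, ha, rfl⟩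
  have hj_mem : ∀ a, j a ∈ coneSubfield hS := fun a =>
    (mem_or_neg_mem P a).imp (hjS a) fun h => map_neg j a ▸ hjS (-a) h
  refine ⟨coneSubfield hS, inferInstance, o, inferInstance, j.codRestrict _ hj_mem,
    hasPolyIVT_coneSubfield hS hnonneg, fun a ha => (hnonneg _).2 (hjS a (hTP ha)), fun h => hfP ?_⟩
  rw [← hj]
  exact congrArg Subtype.val h

end RealClosure

section PolynomialCalculus

open Polynomial

theorem exists_eq_X_sub_C_pow_mul_pow_mul {R : Type*} [CommRing R] [IsDomain R] {a d : R}
    {p : R[X]} (hp : p ≠ 0) (had : a ≠ d) (ha : p.IsRoot a) (hd : p.IsRoot d) :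
    ∃ (m n : ℕ) (v : R[X]),
      p = (Polynomial.X - Polynomial.C a) ^ (m + 1) *
        ((Polynomial.X - Polynomial.C d) ^ (n + 1) * v) ∧
        v.eval a ≠ 0 ∧ v.eval d ≠ 0 := by
  obtain ⟨u, hu, hua⟩ := exists_eq_pow_rootMultiplicity_mul_and_not_dvd p hp a
  have hu0 : u ≠ 0 := by
    rintro rfl
    exact hua (dvd_zero _)
  obtain ⟨v, hv, hvd⟩ := exists_eq_pow_rootMultiplicity_mul_and_not_dvd u hu0 d
  rw [dvd_iff_isRoot, IsRoot.def] at hua hvd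
  have hud : u.eval d = 0 := by
    rw [hu, IsRoot.def, Polynomial.eval_mul] at hd
    refine (mul_eq_zero.1 hd).resolve_left ?_
    simp [sub_ne_zero.2 had.symm]
  obtain ⟨m, hm⟩ := Nat.exists_eq_succ_of_ne_zero ((rootMultiplicity_pos hp).2 ha).ne'
  obtain ⟨n, hn⟩ := Nat.exists_eq_succ_of_ne_zero ((rootMultiplicity_pos hu0).2 hud).ne'
  rw [hm] at hu
  rw [hn] at hv
  refine ⟨m, n, v, by rw [hu, hv], fun h => hua ?_, hvd⟩
  rw [hv, Polynomial.eval_mul, h, mul_zero]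

theorem derivative_X_sub_C_pow_mul_pow_mul {R : Type*} [CommRing R] (a d : R) (m n : ℕ)
    (v : R[X]) :
    derivative ((Polynomial.X - Polynomial.C a) ^ (m + 1) *
      ((Polynomial.X - Polynomial.C d) ^ (n + 1) * v)) =
      (Polynomial.X - Polynomial.C a) ^ m * (Polynomial.X - Polynomial.C d) ^ n *
        (Polynomial.C ((m + 1 : ℕ) : R) * (Polynomial.X - Polynomial.C d) * v +
          Polynomial.C ((n + 1 : ℕ) : R) * (Polynomial.X - Polynomial.C a) * v +
          (Polynomial.X - Polynomial.C a) * (Polynomial.X - Polynomial.C d) * derivative v) := by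
  simp only [derivative_mul, derivative_X_sub_C_pow, Nat.add_sub_cancel, map_natCast]
  ring

variable {R : Type*} [Field R] [LinearOrder R] [IsStrictOrderedRing R] {a b d : R}

namespace HasPolyIVT

theorem exists_root_of_mul_neg (hR : HasPolyIVT R) (f : R[X]) (hab : a < b)
    (h : f.eval a * f.eval b < 0) : ∃ c ∈ Set.Ioo a b, f.eval c = 0 := by
  rcases mul_neg_iff.1 h with ⟨ha, hb⟩ | ⟨ha, hb⟩
  · obtain ⟨c, hc, hc0⟩ := hR (-f) a b hab (by simpa using ha) (by simpa using hb)
    exact ⟨c, hc, by simpa using hc0⟩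
  · exact hR f a b hab ha hb

theorem exists_root_of_sign_ne (hR : HasPolyIVT R) (f : R[X]) (hab : a < b)
    (ha : f.eval a ≠ 0) (hb : f.eval b ≠ 0)
    (h : SignType.sign (f.eval a) ≠ SignType.sign (f.eval b)) :
    ∃ c ∈ Set.Ioo a b, f.eval c = 0 := by
  refine hR.exists_root_of_mul_neg f hab ?_
  rcases ha.lt_or_gt with ha | ha <;> rcases hb.lt_or_gt with hb | hb
  · exact absurd ((sign_neg ha).trans (sign_neg hb).symm) h
  · exact mul_neg_of_neg_of_pos ha hb
  · exact mul_neg_of_pos_of_neg ha hb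
  · exact absurd ((sign_pos ha).trans (sign_pos hb).symm) h

theorem sign_eval_eq_of_forall_uIcc_ne (hR : HasPolyIVT R) {f : R[X]}
    (h : ∀ c ∈ Set.uIcc a b, f.eval c ≠ 0) :
    SignType.sign (f.eval a) = SignType.sign (f.eval b) := by
  have ha := h a Set.left_mem_uIcc
  have hb := h b Set.right_mem_uIcc
  by_contra hne
  rcases lt_trichotomy a b with hab | rfl | hab
  · obtain ⟨c, hc, hc0⟩ := hR.exists_root_of_sign_ne f hab ha hb hne
    exact h c (Set.mem_uIcc_of_le hc.1.le hc.2.le) hc0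
  · exact hne rfl
  · obtain ⟨c, hc, hc0⟩ := hR.exists_root_of_sign_ne f hab hb ha (Ne.symm hne)
    exact h c (Set.mem_uIcc_of_ge hc.1.le hc.2.le) hc0

/-- If `p = (X - a)^(m+1) (X - d)^(n+1) v` has no root in `(a, d)`, neither has `v`, so the cofactor
of `(X - a)^m (X - d)^n` in `p'` takes values of opposite signs at `a` and `d`. -/
theorem exists_derivative_eq_zero_of_forall_Ioo_ne (hR : HasPolyIVT R) {p : R[X]} (had : a < d)
    (hp : p ≠ 0) (ha : p.eval a = 0) (hd : p.eval d = 0)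
    (hno : ∀ c ∈ Set.Ioo a d, p.eval c ≠ 0) :
    ∃ c ∈ Set.Ioo a d, (derivative p).eval c = 0 := by
  obtain ⟨m, n, v, rfl, hva, hvd⟩ := exists_eq_X_sub_C_pow_mul_pow_mul hp had.ne ha hd
  have hpos : 0 < v.eval a * v.eval d := by
    refine (mul_ne_zero hva hvd).lt_or_gt.resolve_left fun h => ?_
    obtain ⟨c, hc, hc0⟩ := hR.exists_root_of_mul_neg v had h
    exact hno c hc (by simp only [Polynomial.eval_mul, hc0, mul_zero])
  rw [derivative_X_sub_C_pow_mul_pow_mul]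
  set w := Polynomial.C ((m + 1 : ℕ) : R) * (Polynomial.X - Polynomial.C d) * v +
    Polynomial.C ((n + 1 : ℕ) : R) * (Polynomial.X - Polynomial.C a) * v +
    (Polynomial.X - Polynomial.C a) * (Polynomial.X - Polynomial.C d) * derivative v with hw
  have hsign : w.eval a * w.eval d < 0 := by
    have hc : (0 : R) < ((m + 1 : ℕ) : R) * ((n + 1 : ℕ) : R) * (d - a) ^ 2 := by
      have := sub_pos.2 had
      positivity
    simp only [hw, Polynomial.eval_add, Polynomial.eval_mul, Polynomial.eval_C,
      Polynomial.eval_sub, Polynomial.eval_X, sub_self, mul_zero, zero_mul, add_zero, zero_add]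
    nlinarith [mul_pos hc hpos]
  obtain ⟨c, hc, hc0⟩ := hR.exists_root_of_mul_neg w had hsign
  exact ⟨c, hc, by rw [Polynomial.eval_mul, hc0, mul_zero]⟩

theorem exists_derivative_eq_zero (hR : HasPolyIVT R) (p : R[X]) (hab : a < b)
    (ha : p.eval a = 0) (hb : p.eval b = 0) :
    ∃ c ∈ Set.Ioo a b, (derivative p).eval c = 0 := by
  rcases eq_or_ne p 0 with rfl | hp
  · obtain ⟨c, hc⟩ := exists_between hab
    exact ⟨c, hc, by simp⟩
  have hne : (p.roots.toFinset.filter (a < ·)).Nonempty := ⟨b, by simp [hp, hb, hab]⟩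
  obtain ⟨d, hd, hmin⟩ := Finset.exists_minimal hne
  simp only [Finset.mem_filter, Multiset.mem_toFinset, mem_roots hp, IsRoot.def] at hd hmin
  obtain ⟨c, hc, hc0⟩ := hR.exists_derivative_eq_zero_of_forall_Ioo_ne hd.2 hp ha hd.1
    fun c hc hc0 => (hmin ⟨hc0, hc.1⟩ hc.2.le).not_gt hc.2
  exact ⟨c, ⟨hc.1, hc.2.trans_le ((le_total d b).elim id (hmin ⟨hb, hab⟩))⟩, hc0⟩

theorem exists_derivative_mul_eq_sub (hR : HasPolyIVT R) (p : R[X]) (hab : a < b) :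
    ∃ c ∈ Set.Ioo a b, (derivative p).eval c * (b - a) = p.eval b - p.eval a := by
  obtain ⟨c, hc, hc0⟩ := hR.exists_derivative_eq_zero
    (p * Polynomial.C (b - a) -
      Polynomial.C (p.eval b - p.eval a) * (Polynomial.X - Polynomial.C a) -
      Polynomial.C (p.eval a * (b - a))) hab
    (by simp) (by simp only [Polynomial.eval_sub, Polynomial.eval_mul, Polynomial.eval_C,
      Polynomial.eval_X]; ring)
  refine ⟨c, hc, ?_⟩
  simp only [derivative_sub, derivative_mul, derivative_C, derivative_X, Polynomial.eval_sub,
    Polynomial.eval_mul, Polynomial.eval_C, mul_zero, zero_mul, add_zero, zero_add, sub_zero,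
    mul_one] at hc0
  linarith

theorem real : HasPolyIVT ℝ := fun f _ _ hab ha hb =>
  intermediate_value_Ioo hab.le f.continuous.continuousOn ⟨ha, hb⟩

end HasPolyIVT

theorem exists_pos_le_eval_of_leadingCoeff_pos (p : R[X]) (h : 0 < p.leadingCoeff) :
    ∃ δ > 0, ∃ B, ∀ y ≥ B, δ ≤ p.eval y := by
  induction hn : p.natDegree generalizing p with
  | zero =>
    obtain ⟨c, rfl⟩ := natDegree_eq_zero.1 hn
    exact ⟨c, by simpa using h, 0, by simp⟩
  | succ n ih =>
    have hdeg : p.divX.natDegree = n := by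
      rw [natDegree_divX_eq_natDegree_tsub_one, hn, Nat.add_sub_cancel]
    obtain ⟨δ, hδ, B, hB⟩ := ih p.divX
      (by rwa [leadingCoeff, hdeg, coeff_divX, ← hn]) hdeg
    refine ⟨δ, hδ, max B ((δ + |p.coeff 0|) / δ), fun y hy => ?_⟩
    have hδy := hB y ((le_max_left _ _).trans hy)
    have hcoeff := (div_le_iff₀ hδ).1 ((le_max_right _ _).trans hy)
    have hy0 : 0 ≤ y := le_trans (by positivity) ((le_max_right _ _).trans hy)
    rw [← divX_mul_X_add p]
    simp only [Polynomial.eval_add, Polynomial.eval_mul, Polynomial.eval_X, Polynomial.eval_C]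
    nlinarith [mul_le_mul_of_nonneg_right hδy hy0, neg_abs_le (p.coeff 0)]

theorem exists_sign_eval_eq_top (p : R[X]) :
    ∃ B, ∀ y ≥ B, SignType.sign (p.eval y) = SignType.sign p.leadingCoeff := by
  rcases lt_trichotomy p.leadingCoeff 0 with h | h | h
  · obtain ⟨δ, hδ, B, hB⟩ := exists_pos_le_eval_of_leadingCoeff_pos (-p) (by simpa using h)
    refine ⟨B, fun y hy => ?_⟩
    have hy' := hB y hy
    rw [Polynomial.eval_neg] at hy'
    rw [sign_neg h, sign_neg (by linarith)]
  · rw [leadingCoeff_eq_zero] at h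
    exact ⟨0, by simp [h]⟩
  · obtain ⟨δ, hδ, B, hB⟩ := exists_pos_le_eval_of_leadingCoeff_pos p h
    exact ⟨B, fun y hy => by rw [sign_pos h, sign_pos (hδ.trans_le (hB y hy))]⟩

theorem exists_sign_eval_eq_bot (p : R[X]) :
    ∃ B, ∀ y ≤ B, SignType.sign (p.eval y) =
      SignType.sign ((-1) ^ p.natDegree * p.leadingCoeff) := by
  obtain ⟨B, hB⟩ := exists_sign_eval_eq_top (p.comp (-Polynomial.X))
  refine ⟨-B, fun y hy => ?_⟩
  have := hB (-y) (le_neg.1 hy)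
  rwa [eval_comp, Polynomial.eval_neg, Polynomial.eval_X, neg_neg, comp_neg_X_leadingCoeff_eq]
    at this

end PolynomialCalculus

section PartialIso

variable {α β : Type*} [LinearOrder α] [LinearOrder β]

theorem eq_of_cmp_eq_of_mem_uIcc {x y z : α} (hx : x ∈ Set.uIcc y z) (h : cmp x y = cmp x z) :
    y = z := by
  have hle := le_iff_le_of_cmp_eq_cmp h
  have hge := le_iff_le_of_cmp_eq_cmp (cmp_eq_cmp_symm.1 h)
  rcases Set.mem_uIcc.1 hx with ⟨hyx, hxz⟩ | ⟨hzx, hxy⟩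
  · exact (hyx.antisymm (hle.2 hxz)).trans (hxz.antisymm (hge.1 hyx))
  · exact ((hge.2 hzx).antisymm hxy).trans ((hle.1 hxy).antisymm hzx)

theorem mem_uIcc_iff_of_cmp_eq {x y z : α} {x' y' z' : β} (hy : cmp x y = cmp x' y')
    (hz : cmp x z = cmp x' z') : x ∈ Set.uIcc y z ↔ x' ∈ Set.uIcc y' z' := by
  simp only [Set.mem_uIcc, le_iff_le_of_cmp_eq_cmp hy, le_iff_le_of_cmp_eq_cmp hz,
    le_iff_le_of_cmp_eq_cmp (cmp_eq_cmp_symm.1 hy), le_iff_le_of_cmp_eq_cmp (cmp_eq_cmp_symm.1 hz)]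

theorem exists_adjacent {ι : Type*} (s : Finset ι) (f : ι → α) {y : α} (hlt : ∃ i ∈ s, f i < y)
    (hgt : ∃ i ∈ s, y < f i) (hne : ∀ i ∈ s, f i ≠ y) :
    ∃ l ∈ s, ∃ r ∈ s, f l < y ∧ y < f r ∧ ∀ i ∈ s, f i < y ∧ f i ≤ f l ∨ y < f i ∧ f r ≤ f i := by
  obtain ⟨i, hi, hiy⟩ := hlt
  obtain ⟨j, hj, hyj⟩ := hgt
  obtain ⟨l, hl, hmax⟩ := (s.filter (f · < y)).exists_max_image f
    ⟨i, Finset.mem_filter.2 ⟨hi, hiy⟩⟩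
  obtain ⟨r, hr, hmin⟩ := (s.filter (y < f ·)).exists_min_image f
    ⟨j, Finset.mem_filter.2 ⟨hj, hyj⟩⟩
  simp only [Finset.mem_filter, and_imp] at hl hr hmax hmin
  exact ⟨l, hl.1, r, hr.1, hl.2, hr.2, fun k hk => (hne k hk).lt_or_gt.imp
    (fun h => ⟨h, hmax k hk h⟩) fun h => ⟨h, hmin k hk h⟩⟩

/-- The point `(y, z)` is in the same relative position to every element of `M` in both
coordinates. -/
def Compat (M : Finset (α × β)) (y : α) (z : β) : Prop := ∀ m ∈ M, cmp m.1 y = cmp m.2 z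

/-- `M` is the graph of a strictly increasing bijection between finite sets. -/
def IsPartialIso (M : Finset (α × β)) : Prop := ∀ m ∈ M, Compat M m.1 m.2

variable {M N : Finset (α × β)} {y : α} {z : β}

theorem Compat.mono (h : Compat M y z) (hNM : N ⊆ M) : Compat N y z := fun m hm => h m (hNM hm)

theorem Compat.image_swap (h : Compat M y z) : Compat (M.image Prod.swap) z y := by
  intro m hm
  obtain ⟨n, hn, rfl⟩ := Finset.mem_image.1 hm
  exact (h n hn).symm

theorem Compat.of_image_swap (h : Compat (M.image Prod.swap) z y) : Compat M y z :=
  fun m hm => (h m.swap (Finset.mem_image_of_mem _ hm)).symm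

theorem IsPartialIso.image_swap (h : IsPartialIso M) : IsPartialIso (M.image Prod.swap) := by
  intro m hm
  obtain ⟨n, hn, rfl⟩ := Finset.mem_image.1 hm
  exact (h n hn).image_swap

theorem IsPartialIso.mono (h : IsPartialIso M) (hNM : N ⊆ M) : IsPartialIso N :=
  fun m hm => (h m (hNM hm)).mono hNM

theorem IsPartialIso.union [DecidableEq (α × β)] (hM : IsPartialIso M) (hN : IsPartialIso N)
    (h : ∀ n ∈ N, Compat M n.1 n.2) : IsPartialIso (M ∪ N) := by
  intro m hm n hn
  rcases Finset.mem_union.1 hm with hm | hm <;> rcases Finset.mem_union.1 hn with hn | hn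
  · exact hM m hm n hn
  · exact cmp_eq_cmp_symm.1 (h n hn m hm)
  · exact h m hm n hn
  · exact hN m hm n hn

theorem IsPartialIso.insert_of_compat [DecidableEq (α × β)] (hM : IsPartialIso M)
    (h : Compat M y z) : IsPartialIso (insert (y, z) M) := by
  rw [Finset.insert_eq, Finset.union_comm]
  refine hM.union ?_ ?_
  · simp [IsPartialIso, Compat]
  · simpa using h

theorem isPartialIso_of_forall_lt_iff_lt
    (h : ∀ m ∈ M, ∀ n ∈ M, m.1 < n.1 ↔ m.2 < n.2) : IsPartialIso M := by
  intro m hm n hn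
  rcases lt_trichotomy n.1 m.1 with hlt | heq | hgt
  · rw [(cmp_eq_lt_iff _ _).2 hlt, (cmp_eq_lt_iff _ _).2 ((h n hn m hm).1 hlt)]
  · rw [(cmp_eq_eq_iff _ _).2 heq, eq_comm, cmp_eq_eq_iff]
    exact le_antisymm (not_lt.1 fun h' => ((h m hm n hn).2 h').ne' heq)
      (not_lt.1 fun h' => ((h n hn m hm).2 h').ne heq)
  · rw [(cmp_eq_gt_iff _ _).2 hgt, (cmp_eq_gt_iff _ _).2 ((h m hm n hn).1 hgt)]

theorem IsPartialIso.exists_compat {β : Type*} [LinearOrder β] [DenselyOrdered β] [NoMinOrder β]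
    [NoMaxOrder β] [Nonempty β] {M : Finset (α × β)} (hM : IsPartialIso M) (y : α) :
    ∃ z, Compat M y z :=
  Order.PartialIso.exists_across ⟨M, fun p hp q hq => hM q hq p hp⟩ y

end PartialIso

section RootSkeleton

open Polynomial

variable {R S : Type*} [Field R] [LinearOrder R] [Field S] [LinearOrder S]

/-- The finite matching `M` carries enough points of `p` and `q` to match their roots: it contains
the roots of their derivatives and a point on either side of all their roots, and `p`, `q` have
the same sign at matched points. -/
structure RootSkeleton (M : Finset (R × S)) (p : R[X]) (q : S[X]) : Prop where
  isPartialIso : IsPartialIso M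
  sign_eq : ∀ m ∈ M, SignType.sign (p.eval m.1) = SignType.sign (q.eval m.2)
  derivative_root_left : ∀ c, (derivative p).eval c = 0 → ∃ m ∈ M, m.1 = c
  derivative_root_right : ∀ c, (derivative q).eval c = 0 → ∃ m ∈ M, m.2 = c
  exists_lt : ∃ m ∈ M, (∀ c, p.eval c = 0 → m.1 < c) ∧ ∀ c, q.eval c = 0 → m.2 < c
  exists_gt : ∃ m ∈ M, (∀ c, p.eval c = 0 → c < m.1) ∧ ∀ c, q.eval c = 0 → c < m.2

variable {M : Finset (R × S)} {p : R[X]} {q : S[X]}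

theorem RootSkeleton.image_swap (h : RootSkeleton M p q) :
    RootSkeleton (M.image Prod.swap) q p where
  isPartialIso := h.isPartialIso.image_swap
  sign_eq := Finset.forall_mem_image.2 fun m hm => (h.sign_eq m hm).symm
  derivative_root_left := by simpa using h.derivative_root_right
  derivative_root_right := by simpa using h.derivative_root_left
  exists_lt := h.exists_lt.elim fun m hm =>
    ⟨m.swap, Finset.mem_image_of_mem _ hm.1, hm.2.2, hm.2.1⟩
  exists_gt := h.exists_gt.elim fun m hm =>
    ⟨m.swap, Finset.mem_image_of_mem _ hm.1, hm.2.2, hm.2.1⟩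

variable [IsStrictOrderedRing R]

theorem HasPolyIVT.eval_mul_eval_neg (hR : HasPolyIVT R) {a b c : R} (hac : a < c) (hcb : c < b)
    (hc : p.eval c = 0) (hder : ∀ x ∈ Set.Ioo a b, (derivative p).eval x ≠ 0) :
    p.eval a * p.eval b < 0 := by
  obtain ⟨x, hx, hx0⟩ := hR.exists_derivative_mul_eq_sub p hac
  obtain ⟨y, hy, hy0⟩ := hR.exists_derivative_mul_eq_sub p hcb
  have hpos : 0 < (derivative p).eval x * (derivative p).eval y := by
    refine (mul_ne_zero (hder x ⟨hx.1, hx.2.trans hcb⟩)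
      (hder y ⟨hac.trans hy.1, hy.2⟩)).lt_or_gt.resolve_left fun hneg => ?_
    obtain ⟨w, hw, hw0⟩ := hR.exists_root_of_mul_neg _ (hx.2.trans hy.1) hneg
    exact hder w ⟨hx.1.trans hw.1, hw.2.trans hy.2⟩ hw0
  have hprod := mul_pos hpos (mul_pos (sub_pos.2 hac) (sub_pos.2 hcb))
  rw [hc] at hx0 hy0
  have : (derivative p).eval x * (derivative p).eval y * ((c - a) * (b - c)) =
      -(p.eval a * p.eval b) := by
    linear_combination ((derivative p).eval y * (b - c)) * hx0 - p.eval a * hy0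
  linarith

namespace RootSkeleton

theorem lt_of_compat_of_lt (hR : HasPolyIVT R) (h : RootSkeleton M p q) {c₁ c₂ : R} {d₁ d₂ : S}
    (h₁ : p.eval c₁ = 0) (h₂ : p.eval c₂ = 0) (hcd₁ : Compat M c₁ d₁) (hcd₂ : Compat M c₂ d₂)
    (hlt : c₁ < c₂) : d₁ < d₂ := by
  obtain ⟨x, hx, hx0⟩ := hR.exists_derivative_eq_zero p hlt h₁ h₂
  obtain ⟨m, hm, rfl⟩ := h.derivative_root_left x hx0
  exact ((lt_iff_lt_of_cmp_eq_cmp (cmp_eq_cmp_symm.1 (hcd₁ m hm))).1 hx.1).trans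
    ((lt_iff_lt_of_cmp_eq_cmp (hcd₂ m hm)).1 hx.2)

theorem exists_forall_uIcc_ne (hR : HasPolyIVT R) (h : RootSkeleton M p q)
    (hroot : ∀ c, p.eval c = 0 → ∃ m ∈ M, m.1 = c) {y : R} (hy : ∀ m ∈ M, m.1 ≠ y) :
    ∃ m ∈ M, ∀ c ∈ Set.uIcc y m.1, p.eval c ≠ 0 := by
  obtain ⟨a, ha, ha', -⟩ := h.exists_lt
  obtain ⟨b, hb, hb', -⟩ := h.exists_gt
  rcases (hy a ha).lt_or_gt with hay | hya
  swap
  · refine ⟨a, ha, fun c hc hc0 => (ha' c hc0).not_ge ?_⟩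
    exact (Set.uIcc_of_le hya.le ▸ hc).2
  rcases (hy b hb).lt_or_gt with hby | hyb
  · refine ⟨b, hb, fun c hc hc0 => (hb' c hc0).not_ge ?_⟩
    exact (Set.uIcc_of_ge hby.le ▸ hc).1
  obtain ⟨l, hl, r, hr, hly, hyr, hadj⟩ := exists_adjacent M Prod.fst ⟨a, ha, hay⟩ ⟨b, hb, hyb⟩ hy
  by_cases hl0 : p.eval l.1 = 0
  · have hr0 : p.eval r.1 ≠ 0 := by
      intro hr0
      obtain ⟨x, hx, hx0⟩ := hR.exists_derivative_eq_zero p (hly.trans hyr) hl0 hr0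
      obtain ⟨m, hm, rfl⟩ := h.derivative_root_left x hx0
      exact (hadj m hm).elim (fun h => h.2.not_gt hx.1) fun h => h.2.not_gt hx.2
    refine ⟨r, hr, fun c hc hc0 => ?_⟩
    obtain ⟨m, hm, rfl⟩ := hroot c hc0
    rw [Set.uIcc_of_le hyr.le] at hc
    rcases hadj m hm with hm | hm
    · exact hm.1.not_ge hc.1
    · exact hr0 (hc.2.antisymm hm.2 ▸ hc0)
  · refine ⟨l, hl, fun c hc hc0 => ?_⟩
    obtain ⟨m, hm, rfl⟩ := hroot c hc0
    rw [Set.uIcc_of_ge hly.le] at hc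
    rcases hadj m hm with hm | hm
    · exact hl0 (hm.2.antisymm hc.1 ▸ hc0)
    · exact hm.1.not_ge hc.2

variable [IsStrictOrderedRing S]

theorem exists_compat_root (hR : HasPolyIVT R) (hS : HasPolyIVT S) (h : RootSkeleton M p q) {c : R}
    (hc : p.eval c = 0) : ∃ d, q.eval d = 0 ∧ Compat M c d := by
  by_cases hcM : ∃ m ∈ M, m.1 = c
  · obtain ⟨m, hm, rfl⟩ := hcM
    refine ⟨m.2, ?_, h.isPartialIso m hm⟩
    rw [← sign_eq_zero_iff, ← h.sign_eq m hm, hc, sign_zero]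
  push Not at hcM
  obtain ⟨l, hl, r, hr, hlc, hcr, hadj⟩ := exists_adjacent M Prod.fst
    (h.exists_lt.imp fun m hm => ⟨hm.1, hm.2.1 c hc⟩)
    (h.exists_gt.imp fun m hm => ⟨hm.1, hm.2.1 c hc⟩) hcM
  have hneg : p.eval l.1 * p.eval r.1 < 0 := by
    refine hR.eval_mul_eval_neg hlc hcr hc fun x hx hx0 => ?_
    obtain ⟨m, hm, rfl⟩ := h.derivative_root_left x hx0
    exact (hadj m hm).elim (fun h => h.2.not_gt hx.1) fun h => h.2.not_gt hx.2
  rw [← sign_eq_neg_one_iff, sign_mul, h.sign_eq l hl, h.sign_eq r hr, ← sign_mul,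
    sign_eq_neg_one_iff] at hneg
  have hlr : l.2 < r.2 :=
    (lt_iff_lt_of_cmp_eq_cmp (h.isPartialIso r hr l hl)).1 (hlc.trans hcr)
  obtain ⟨d, hd, hd0⟩ := hS.exists_root_of_mul_neg q hlr hneg
  refine ⟨d, hd0, fun m hm => ?_⟩
  rcases hadj m hm with ⟨hmc, hml⟩ | ⟨hcm, hrm⟩
  · rw [(cmp_eq_lt_iff _ _).2 hmc, (cmp_eq_lt_iff _ _).2]
    exact ((le_iff_le_of_cmp_eq_cmp (h.isPartialIso l hl m hm)).1 hml).trans_lt hd.1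
  · rw [(cmp_eq_gt_iff _ _).2 hcm, (cmp_eq_gt_iff _ _).2]
    exact hd.2.trans_le ((le_iff_le_of_cmp_eq_cmp (h.isPartialIso m hm r hr)).1 hrm)

theorem exists_union_roots (hR : HasPolyIVT R) (hS : HasPolyIVT S) (h : RootSkeleton M p q)
    (hp : p ≠ 0) (hq : q ≠ 0) :
    ∃ M', M ⊆ M' ∧ RootSkeleton M' p q ∧ (∀ c, p.eval c = 0 → ∃ m ∈ M', m.1 = c) ∧
      ∀ d, q.eval d = 0 → ∃ m ∈ M', m.2 = d := by
  classical
  let N := (p.roots.toFinset ×ˢ q.roots.toFinset).filter fun m => Compat M m.1 m.2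
  have hN : ∀ m, m ∈ N ↔ (p.eval m.1 = 0 ∧ q.eval m.2 = 0) ∧ Compat M m.1 m.2 := by
    simp [N, hp, hq]
  have hN_iso : IsPartialIso N := isPartialIso_of_forall_lt_iff_lt fun m hm n hn => by
    rw [hN] at hm hn
    exact ⟨h.lt_of_compat_of_lt hR hm.1.1 hn.1.1 hm.2 hn.2,
      h.image_swap.lt_of_compat_of_lt hS hm.1.2 hn.1.2 hm.2.image_swap hn.2.image_swap⟩
  have hsub : M ⊆ M ∪ N := Finset.subset_union_left
  refine ⟨M ∪ N, hsub,
    ⟨h.isPartialIso.union hN_iso fun n hn => ((hN n).1 hn).2, ?_, ?_, ?_, ?_, ?_⟩,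
    fun c hc => ?_, fun d hd => ?_⟩
  · intro m hm
    rcases Finset.mem_union.1 hm with hm | hm
    · exact h.sign_eq m hm
    · rw [((hN m).1 hm).1.1, ((hN m).1 hm).1.2, sign_zero, sign_zero]
  · exact fun c hc => (h.derivative_root_left c hc).imp fun m hm => ⟨hsub hm.1, hm.2⟩
  · exact fun c hc => (h.derivative_root_right c hc).imp fun m hm => ⟨hsub hm.1, hm.2⟩
  · exact h.exists_lt.imp fun m hm => ⟨hsub hm.1, hm.2⟩
  · exact h.exists_gt.imp fun m hm => ⟨hsub hm.1, hm.2⟩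
  · obtain ⟨d, hd, hcd⟩ := h.exists_compat_root hR hS hc
    exact ⟨(c, d), Finset.mem_union_right _ ((hN _).2 ⟨⟨hc, hd⟩, hcd⟩), rfl⟩
  · obtain ⟨c, hc, hdc⟩ := h.image_swap.exists_compat_root hS hR hd
    exact ⟨(c, d), Finset.mem_union_right _ ((hN _).2 ⟨⟨hc, hd⟩, hdc.of_image_swap⟩), rfl⟩

theorem sign_eval_eq_of_compat (hR : HasPolyIVT R) (hS : HasPolyIVT S) (h : RootSkeleton M p q)
    (hroot : ∀ c, p.eval c = 0 → ∃ m ∈ M, m.1 = c) (hroot' : ∀ d, q.eval d = 0 → ∃ m ∈ M, m.2 = d)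
    {y : R} {z : S} (hyz : Compat M y z) :
    SignType.sign (p.eval y) = SignType.sign (q.eval z) := by
  by_cases hy : ∃ m ∈ M, m.1 = y
  · obtain ⟨m, hm, rfl⟩ := hy
    rw [← (eq_iff_eq_of_cmp_eq_cmp (hyz m hm)).1 rfl]
    exact h.sign_eq m hm
  push Not at hy
  obtain ⟨m, hm, hp⟩ := h.exists_forall_uIcc_ne hR hroot hy
  have hq : ∀ d ∈ Set.uIcc z m.2, q.eval d ≠ 0 := by
    intro d hd hd0
    obtain ⟨n, hn, rfl⟩ := hroot' d hd0
    refine hp n.1 ((mem_uIcc_iff_of_cmp_eq (hyz n hn) (h.isPartialIso m hm n hn)).2 hd) ?_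
    rw [← sign_eq_zero_iff, h.sign_eq n hn, hd0, sign_zero]
  rw [hR.sign_eval_eq_of_forall_uIcc_ne hp, h.sign_eq m hm, hS.sign_eval_eq_of_forall_uIcc_ne hq]

end RootSkeleton

end RootSkeleton

section SignMatching

open Polynomial

section Extension

variable {R S : Type*} [Field R] [LinearOrder R] [IsStrictOrderedRing R]
  [Field S] [LinearOrder S] [IsStrictOrderedRing S]

theorem exists_lt_roots_sign_eval_eq {p : R[X]} (hp : p ≠ 0) (s : Finset R) :
    ∃ a, (∀ x ∈ s, a < x) ∧ (∀ c, p.eval c = 0 → a < c) ∧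
      SignType.sign (p.eval a) = SignType.sign ((-1) ^ p.natDegree * p.leadingCoeff) := by
  obtain ⟨B, hB⟩ := exists_sign_eval_eq_bot p
  obtain ⟨a, ha⟩ : ∃ a, ∀ x ∈ insert B (s ∪ p.roots.toFinset), a ≤ x :=
    (insert B (s ∪ p.roots.toFinset)).bddBelow
  refine ⟨a - 1, fun x hx => ?_, fun c hc => ?_, hB _ ?_⟩
  · linarith [ha x (by simp [hx])]
  · linarith [ha c (by simp [hp, hc])]
  · linarith [ha B (by simp)]

theorem exists_gt_roots_sign_eval_eq {p : R[X]} (hp : p ≠ 0) (s : Finset R) :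
    ∃ b, (∀ x ∈ s, x < b) ∧ (∀ c, p.eval c = 0 → c < b) ∧
      SignType.sign (p.eval b) = SignType.sign p.leadingCoeff := by
  obtain ⟨B, hB⟩ := exists_sign_eval_eq_top p
  obtain ⟨b, hb⟩ : ∃ b, ∀ x ∈ insert B (s ∪ p.roots.toFinset), x ≤ b :=
    (insert B (s ∪ p.roots.toFinset)).bddAbove
  refine ⟨b + 1, fun x hx => ?_, fun c hc => ?_, hB _ ?_⟩
  · linarith [hb x (by simp [hx])]
  · linarith [hb c (by simp [hp, hc])]
  · linarith [hb B (by simp)]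

theorem IsPartialIso.exists_rootSkeleton {N : Finset (R × S)} (hN : IsPartialIso N) {p : R[X]}
    {q : S[X]} (hp : p ≠ 0) (hq : q ≠ 0) (hdeg : p.natDegree = q.natDegree)
    (hlc : SignType.sign p.leadingCoeff = SignType.sign q.leadingCoeff)
    (hsign : ∀ m ∈ N, SignType.sign (p.eval m.1) = SignType.sign (q.eval m.2))
    (hder : ∀ c, (derivative p).eval c = 0 → ∃ m ∈ N, m.1 = c)
    (hder' : ∀ c, (derivative q).eval c = 0 → ∃ m ∈ N, m.2 = c) :
    ∃ M, N ⊆ M ∧ RootSkeleton M p q := by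
  classical
  obtain ⟨a, haN, hap, ha⟩ := exists_lt_roots_sign_eval_eq hp (N.image Prod.fst)
  obtain ⟨a', haN', haq, ha'⟩ := exists_lt_roots_sign_eval_eq hq (N.image Prod.snd)
  have hN₁ : IsPartialIso (insert (a, a') N) := hN.insert_of_compat fun m hm => by
    rw [(cmp_eq_gt_iff _ _).2 (haN _ (Finset.mem_image_of_mem _ hm)),
      (cmp_eq_gt_iff _ _).2 (haN' _ (Finset.mem_image_of_mem _ hm))]
  obtain ⟨b, hbN, hbp, hb⟩ :=
    exists_gt_roots_sign_eval_eq hp ((insert (a, a') N).image Prod.fst)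
  obtain ⟨b', hbN', hbq, hb'⟩ :=
    exists_gt_roots_sign_eval_eq hq ((insert (a, a') N).image Prod.snd)
  have hN₂ : IsPartialIso (insert (b, b') (insert (a, a') N)) := hN₁.insert_of_compat fun m hm => by
    rw [(cmp_eq_lt_iff _ _).2 (hbN _ (Finset.mem_image_of_mem _ hm)),
      (cmp_eq_lt_iff _ _).2 (hbN' _ (Finset.mem_image_of_mem _ hm))]
  have hsub : N ⊆ insert (b, b') (insert (a, a') N) :=
    (Finset.subset_insert _ _).trans (Finset.subset_insert _ _)
  refine ⟨_, hsub, hN₂, fun m hm => ?_, fun c hc => (hder c hc).imp fun m => And.imp_left (@hsub m),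
    fun c hc => (hder' c hc).imp fun m => And.imp_left (@hsub m),
    ⟨(a, a'), by simp, hap, haq⟩, ⟨(b, b'), by simp, hbp, hbq⟩⟩
  rcases Finset.mem_insert.1 hm with rfl | hm
  · rw [hb, hb', hlc]
  rcases Finset.mem_insert.1 hm with rfl | hm
  · rw [ha, ha', hdeg, sign_mul, sign_mul, hlc]
    rcases Nat.even_or_odd q.natDegree with h | h <;> simp [h.neg_one_pow]
  · exact hsign m hm

end Extension

variable {R S : Type*} [Field R] [LinearOrder R] [Field S] [LinearOrder S]

/-- The finite increasing matching `M` contains all roots of the nonzero polynomials occurring in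
the pairs in `E`, and the polynomials of each pair have the same sign at points which are in the
same position relative to `M`. -/
structure IsSignMatching (M : Finset (R × S)) (E : Set (R[X] × S[X])) : Prop where
  isPartialIso : IsPartialIso M
  eq_zero_iff : ∀ e ∈ E, e.1 = 0 ↔ e.2 = 0
  root_left : ∀ e ∈ E, e.1 ≠ 0 → ∀ y, e.1.eval y = 0 → ∃ m ∈ M, m.1 = y
  root_right : ∀ e ∈ E, e.2 ≠ 0 → ∀ z, e.2.eval z = 0 → ∃ m ∈ M, m.2 = z
  sign_eq : ∀ e ∈ E, ∀ y z, Compat M y z →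
    SignType.sign (e.1.eval y) = SignType.sign (e.2.eval z)

namespace IsSignMatching

variable {M N : Finset (R × S)} {E F : Set (R[X] × S[X])} {p : R[X]} {q : S[X]}

theorem mono (h : IsSignMatching M E) (hF : F ⊆ E) : IsSignMatching M F where
  isPartialIso := h.isPartialIso
  eq_zero_iff e he := h.eq_zero_iff e (hF he)
  root_left e he := h.root_left e (hF he)
  root_right e he := h.root_right e (hF he)
  sign_eq e he := h.sign_eq e (hF he)

theorem insert_pair (h : IsSignMatching N F) (hNM : N ⊆ M) (hM : IsPartialIso M) (hp : p ≠ 0)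
    (hq : q ≠ 0) (hl : ∀ y, p.eval y = 0 → ∃ m ∈ M, m.1 = y)
    (hr : ∀ z, q.eval z = 0 → ∃ m ∈ M, m.2 = z)
    (hs : ∀ y z, Compat M y z → SignType.sign (p.eval y) = SignType.sign (q.eval z)) :
    IsSignMatching M (insert (p, q) F) where
  isPartialIso := hM
  eq_zero_iff := Set.forall_mem_insert.2 ⟨by simp [hp, hq], h.eq_zero_iff⟩
  root_left := Set.forall_mem_insert.2 ⟨fun _ => hl, fun e he h0 y hy =>
    (h.root_left e he h0 y hy).imp fun m => And.imp_left (@hNM m)⟩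
  root_right := Set.forall_mem_insert.2 ⟨fun _ => hr, fun e he h0 z hz =>
    (h.root_right e he h0 z hz).imp fun m => And.imp_left (@hNM m)⟩
  sign_eq := Set.forall_mem_insert.2 ⟨hs, fun e he y z hyz => h.sign_eq e he y z (hyz.mono hNM)⟩

theorem eval_eq_zero_iff [IsStrictOrderedRing R] [IsStrictOrderedRing S]
    (h : IsSignMatching M E) {e : R[X] × S[X]} (he : e ∈ E) {y : R} {z : S} (hyz : Compat M y z) :
    e.1.eval y = 0 ↔ e.2.eval z = 0 := by
  rw [← sign_eq_zero_iff, h.sign_eq e he y z hyz, sign_eq_zero_iff]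

variable [IsStrictOrderedRing R] [IsStrictOrderedRing S]

/-- Points unrelated to the roots can be dropped from a matching: they are not needed to determine
the signs, by the intermediate value property. -/
theorem exists_restrict (hS : HasPolyIVT S) (h : IsSignMatching M E) :
    ∃ N ⊆ M, IsSignMatching N E ∧ ∀ m ∈ N, ∃ e ∈ E, e.1 ≠ 0 ∧ e.1.eval m.1 = 0 := by
  classical
  let N := M.filter fun m => ∃ e ∈ E, e.1 ≠ 0 ∧ e.1.eval m.1 = 0
  have hN : ∀ m, m ∈ N ↔ m ∈ M ∧ ∃ e ∈ E, e.1 ≠ 0 ∧ e.1.eval m.1 = 0 := by simp [N]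
  have hNM : N ⊆ M := Finset.filter_subset _ _
  have hright : ∀ e ∈ E, e.2 ≠ 0 → ∀ z, e.2.eval z = 0 → ∃ m ∈ N, m.2 = z := by
    intro e he h0 z hz
    obtain ⟨m, hm, rfl⟩ := h.root_right e he h0 z hz
    exact ⟨m, (hN m).2 ⟨hm, e, he, (h.eq_zero_iff e he).not.2 h0,
      (h.eval_eq_zero_iff he (h.isPartialIso m hm)).2 hz⟩, rfl⟩
  refine ⟨N, hNM, ⟨h.isPartialIso.mono hNM, h.eq_zero_iff, fun e he h0 y hy => ?_, hright,
    fun e he y z hyz => ?_⟩, fun m hm => ((hN m).1 hm).2⟩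
  · obtain ⟨m, hm, rfl⟩ := h.root_left e he h0 y hy
    exact ⟨m, (hN m).2 ⟨hm, e, he, h0, hy⟩, rfl⟩
  · obtain ⟨z', hz'⟩ := h.isPartialIso.exists_compat y
    rw [h.sign_eq e he y z' hz']
    by_cases h0 : e.2 = 0
    · simp only [h0, Polynomial.eval_zero]
    by_cases hzz' : z' = z
    · rw [hzz']
    refine hS.sign_eval_eq_of_forall_uIcc_ne fun c hc hc0 => hzz' ?_
    obtain ⟨m, hm, rfl⟩ := hright e he h0 c hc0
    exact eq_of_cmp_eq_of_mem_uIcc hc ((hz' m (hNM hm)).symm.trans (hyz m hm))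

/-- The step of the Cohen–Hörmander algorithm: the signs of `(p, q)` at the roots of `F` are those
of the pairs in `E`, and its derivative belongs to `F`. -/
theorem exists_insert (hR : HasPolyIVT R) (hS : HasPolyIVT S) (hM : IsSignMatching M E)
    (hF : F ⊆ E) (hp : p ≠ 0) (hq : q ≠ 0) (hder : (derivative p, derivative q) ∈ F)
    (hdeg : p.natDegree = q.natDegree)
    (hlc : SignType.sign p.leadingCoeff = SignType.sign q.leadingCoeff)
    (hrem : ∀ e ∈ F, e.1 ≠ 0 → ∃ r ∈ E,
      (∀ y, e.1.eval y = 0 → SignType.sign (p.eval y) = SignType.sign (r.1.eval y)) ∧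
      ∀ z, e.2.eval z = 0 → SignType.sign (q.eval z) = SignType.sign (r.2.eval z)) :
    ∃ M' : Finset (R × S), IsSignMatching M' (insert (p, q) F) := by
  obtain ⟨N, hNM, hN, hNroot⟩ := (hM.mono hF).exists_restrict hS
  rcases Nat.eq_zero_or_pos p.natDegree with h0 | hpos
  · obtain ⟨c, rfl⟩ := natDegree_eq_zero.1 h0
    obtain ⟨d, rfl⟩ := natDegree_eq_zero.1 (hdeg ▸ h0)
    rw [leadingCoeff_C, leadingCoeff_C] at hlc
    rw [Ne, Polynomial.C_eq_zero] at hp hq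
    exact ⟨N, hN.insert_pair subset_rfl hN.isPartialIso (by simpa) (by simpa) (by simp [hp])
      (by simp [hq]) (by simp [hlc])⟩
  have hsign : ∀ m ∈ N, SignType.sign (p.eval m.1) = SignType.sign (q.eval m.2) := by
    intro m hm
    obtain ⟨e, he, he0, hem⟩ := hNroot m hm
    obtain ⟨r, hr, hpr, hqr⟩ := hrem e he he0
    have hem' := (hN.eval_eq_zero_iff he (hN.isPartialIso m hm)).1 hem
    rw [hpr _ hem, hqr _ hem', hM.sign_eq r hr _ _ (hM.isPartialIso m (hNM hm))]
  have hp' : derivative p ≠ 0 := fun h => hpos.ne' (derivative_eq_zero.1 h)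
  have hq' : derivative q ≠ 0 := fun h => hpos.ne' (hdeg ▸ derivative_eq_zero.1 h)
  obtain ⟨M₁, hNM₁, hM₁⟩ := hN.isPartialIso.exists_rootSkeleton hp hq hdeg hlc hsign
    (hN.root_left _ hder hp') (hN.root_right _ hder hq')
  obtain ⟨M₂, hM₁₂, hM₂, hl, hr⟩ := hM₁.exists_union_roots hR hS hp hq
  exact ⟨M₂, hN.insert_pair (hNM₁.trans hM₁₂) hM₂.isPartialIso hp hq hl hr fun y z =>
    hM₂.sign_eval_eq_of_compat hR hS hl hr⟩

end IsSignMatching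

end SignMatching

section Transfer

open Polynomial Filter

section PseudoDivision

variable {D : Type*} [CommRing D]

theorem exists_leadingCoeff_pow_mul_eq_mul_add {f : D[X]} (hf : f ≠ 0) (p : D[X]) :
    ∃ (k : ℕ) (g r : D[X]), r.degree < f.degree ∧
      Polynomial.C (f.leadingCoeff ^ k) * p = g * f + r := by
  induction hn : p.natDegree using Nat.strong_induction_on generalizing p with
  | _ n ih =>
  subst hn
  rcases lt_or_ge p.degree f.degree with hlt | hle
  · exact ⟨0, 0, p, hlt, by simp⟩
  have hle' := natDegree_le_natDegree hle
  rcases Nat.eq_zero_or_pos p.natDegree with h0 | hpos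
  · obtain ⟨c, rfl⟩ := natDegree_eq_zero.1 (Nat.le_zero.1 (h0 ▸ hle'))
    exact ⟨1, p, 0, by rwa [degree_zero, bot_lt_iff_ne_bot, Ne, degree_eq_bot],
      by rw [leadingCoeff_C, pow_one]; ring⟩
  obtain ⟨k, g, r, hr, h⟩ :=
    ih _ (natDegree_cancelLeads_lt_of_natDegree_le_natDegree hle' hpos) (f.cancelLeads p) rfl
  refine ⟨k + 1, g + Polynomial.C (f.leadingCoeff ^ k * p.leadingCoeff) *
    Polynomial.X ^ (p.natDegree - f.natDegree), r, hr, ?_⟩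
  rw [cancelLeads, Nat.sub_eq_zero_of_le hle'] at h
  simp only [map_mul, map_pow] at h ⊢
  linear_combination h

end PseudoDivision

section SignEqAtRoots

variable {R D : Type*} [Field R] [LinearOrder R] [IsStrictOrderedRing R] [CommRing D]

theorem map_eraseLead_of_map_leadingCoeff_eq_zero {D R : Type*} [Semiring D] [Semiring R]
    {φ : D →+* R} {p : D[X]} (h : φ p.leadingCoeff = 0) : p.eraseLead.map φ = p.map φ := by
  conv_rhs => rw [← p.eraseLead_add_monomial_natDegree_leadingCoeff]
  rw [Polynomial.map_add, Polynomial.map_monomial, h, monomial_zero_right, add_zero]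

/-- After applying `φ` to the coefficients, `p` and `r` have the same signs at the roots of `f`. -/
def SignEqAtRoots (φ : D →+* R) (f p r : D[X]) : Prop :=
  ∀ y, (f.map φ).eval y = 0 →
    SignType.sign ((p.map φ).eval y) = SignType.sign ((r.map φ).eval y)

theorem signEqAtRoots_pow_mul_of_eq {φ : D →+* R} {f p g r : D[X]} {k : ℕ}
    (hf : φ f.leadingCoeff ≠ 0) (h : Polynomial.C (f.leadingCoeff ^ k) * p = g * f + r) :
    SignEqAtRoots φ f p (Polynomial.C (f.leadingCoeff ^ k) * r) := by
  intro y hy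
  have hy' := congrArg (fun s => (s.map φ).eval y) h
  simp only [Polynomial.map_add, Polynomial.map_mul, Polynomial.map_C, Polynomial.eval_add,
    Polynomial.eval_mul, Polynomial.eval_C, hy, mul_zero, zero_add] at hy' ⊢
  have hpos : 0 < φ (f.leadingCoeff ^ k) * φ (f.leadingCoeff ^ k) := by
    rw [map_pow]
    exact mul_self_pos.2 (pow_ne_zero k hf)
  rw [← hy', ← mul_assoc, sign_mul (_ * _), sign_pos hpos, one_mul]

variable {S B : Type*} [Field S] [LinearOrder S] [IsStrictOrderedRing S]

theorem exists_degree_lt_signEqAtRoots {φ : D →+* R} {l : Filter B} {ψ : B → D →+* S}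
    (hl : ∀ g, ∀ᶠ b in l, SignType.sign (ψ b g) = SignType.sign (φ g)) (f p : D[X])
    (hf : f.map φ ≠ 0) : ∃ r : D[X], r.degree < f.degree ∧ SignEqAtRoots φ f p r ∧
      ∀ᶠ b in l, SignEqAtRoots (ψ b) f p r := by
  have hf0 : f ≠ 0 := by rintro rfl; simp at hf
  induction hn : f.degree using WellFoundedLT.induction generalizing f with
  | _ n ih =>
  subst hn
  by_cases hlc : φ f.leadingCoeff = 0
  · have hmap := map_eraseLead_of_map_leadingCoeff_eq_zero hlc
    have hlt := degree_eraseLead_lt hf0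
    obtain ⟨r, hr, hφ, hψ⟩ := ih _ hlt f.eraseLead (hmap ▸ hf)
      (fun h => hf (by rw [← hmap, h, Polynomial.map_zero])) rfl
    refine ⟨r, hr.trans hlt, fun y hy => hφ y (hmap ▸ hy), ?_⟩
    filter_upwards [hψ, hl f.leadingCoeff] with b hb hlcb y hy
    rw [hlc, sign_zero, sign_eq_zero_iff] at hlcb
    exact hb y (map_eraseLead_of_map_leadingCoeff_eq_zero hlcb ▸ hy)
  · obtain ⟨k, g, r, hr, h⟩ := exists_leadingCoeff_pow_mul_eq_mul_add hf0 p
    refine ⟨_, (smul_eq_C_mul (p := r) _ ▸ degree_smul_le _ r).trans_lt hr,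
      signEqAtRoots_pow_mul_of_eq hlc h, ?_⟩
    filter_upwards [hl f.leadingCoeff] with b hb
    refine signEqAtRoots_pow_mul_of_eq (fun hb0 => hlc ?_) h
    rwa [hb0, sign_zero, eq_comm, sign_eq_zero_iff] at hb

end SignEqAtRoots

section EventualMatching

variable {R S D B : Type*} [Field R] [LinearOrder R] [Field S] [LinearOrder S] [CommRing D]

/-- For eventually all `b`, the polynomials in `E` behave over `S`, with coefficients specialized
along `ψ b`, as they do over `R`, with coefficients specialized along `φ`. -/
def EventuallySignMatching (φ : D →+* R) (l : Filter B) (ψ : B → D →+* S) (E : Set D[X]) : Prop :=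
  ∀ᶠ b in l, ∃ M : Finset (R × S),
    IsSignMatching M ((fun p : D[X] => (p.map φ, p.map (ψ b))) '' E)

variable {φ : D →+* R} {l : Filter B} {ψ : B → D →+* S} {E F : Set D[X]} {p : D[X]}

theorem EventuallySignMatching.mono (h : EventuallySignMatching φ l ψ E) (hF : F ⊆ E) :
    EventuallySignMatching φ l ψ F :=
  Filter.Eventually.mono h fun _ => Exists.imp fun _ hM => hM.mono (Set.image_mono hF)

theorem EventuallySignMatching.insert_of_eraseLead
    (hl : ∀ g, ∀ᶠ b in l, SignType.sign (ψ b g) = SignType.sign (φ g))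
    (hlc : φ p.leadingCoeff = 0) (h : EventuallySignMatching φ l ψ (insert p.eraseLead E)) :
    EventuallySignMatching φ l ψ (insert p E) := by
  filter_upwards [hl p.leadingCoeff, h] with b hb hM
  rw [hlc, sign_zero, sign_eq_zero_iff] at hb
  rw [Set.image_insert_eq] at hM ⊢
  rwa [map_eraseLead_of_map_leadingCoeff_eq_zero hlc,
    map_eraseLead_of_map_leadingCoeff_eq_zero hb] at hM

variable [IsStrictOrderedRing R] [IsStrictOrderedRing S]

theorem exists_eventuallySignMatching_insert (hR : HasPolyIVT R) (hS : HasPolyIVT S)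
    (hl : ∀ g, ∀ᶠ b in l, SignType.sign (ψ b g) = SignType.sign (φ g))
    (hlc : φ p.leadingCoeff ≠ 0) (hF : F.Finite) (hder : derivative p ∈ F) {n : WithBot ℕ}
    (hn : ∀ f ∈ F, f.degree ≤ n) :
    ∃ G : Set D[X], G.Finite ∧ (∀ g ∈ G, g.degree < n) ∧
      (EventuallySignMatching φ l ψ (F ∪ G) → EventuallySignMatching φ l ψ (insert p F)) := by
  choose! rem hdeg hφ hψ using fun f => exists_degree_lt_signEqAtRoots hl f p
  refine ⟨rem '' {f ∈ F | f.map φ ≠ 0}, (hF.subset (Set.sep_subset _ _)).image _, ?_, fun h => ?_⟩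
  · rintro _ ⟨f, ⟨hf, hf0⟩, rfl⟩
    exact (hdeg f hf0).trans_le (hn f hf)
  have hψF : ∀ᶠ b in l, ∀ f ∈ F, f.map φ ≠ 0 → SignEqAtRoots (ψ b) f p (rem f) :=
    (eventually_all_finite hF).2 fun f _ => eventually_imp_distrib_left.2 (hψ f)
  filter_upwards [h, hψF, hl p.leadingCoeff] with b ⟨M, hM⟩ hb hlcb
  have hlc' : ψ b p.leadingCoeff ≠ 0 := by
    rwa [← sign_ne_zero, hlcb, sign_ne_zero]
  rw [Set.image_insert_eq]
  refine hM.exists_insert hR hS (Set.image_mono Set.subset_union_left)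
    (fun h => hlc (by
      rw [← leadingCoeff_map_of_leadingCoeff_ne_zero _ hlc, h, leadingCoeff_zero]))
    (fun h => hlc' (by
      rw [← leadingCoeff_map_of_leadingCoeff_ne_zero _ hlc', h, leadingCoeff_zero]))
    ⟨_, hder, by simp only [derivative_map]⟩ ?_ ?_ ?_
  · rw [natDegree_map_of_leadingCoeff_ne_zero _ hlc, natDegree_map_of_leadingCoeff_ne_zero _ hlc']
  · rw [leadingCoeff_map_of_leadingCoeff_ne_zero _ hlc,
      leadingCoeff_map_of_leadingCoeff_ne_zero _ hlc', hlcb]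
  · rintro _ ⟨f, hf, rfl⟩ hf0
    exact ⟨_, ⟨rem f, Or.inr ⟨f, ⟨hf, hf0⟩, rfl⟩, rfl⟩, hφ f hf0, hb f hf hf0⟩

theorem degree_eraseLead_lt_of_degree_le {n : ℕ} (hp : p.degree ≤ n) : p.eraseLead.degree < n := by
  rcases eq_or_ne p 0 with rfl | hp0
  · rw [eraseLead_zero, degree_zero]
    exact WithBot.bot_lt_coe n
  · exact (degree_eraseLead_lt hp0).trans_le hp

theorem eventuallySignMatching_union (hR : HasPolyIVT R) (hS : HasPolyIVT S)
    (hl : ∀ g, ∀ᶠ b in l, SignType.sign (ψ b g) = SignType.sign (φ g)) {n : ℕ}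
    (ih : ∀ L : Set D[X], L.Finite → (∀ p ∈ L, p.degree < n) → EventuallySignMatching φ l ψ L)
    {H : Set D[X]} (hH : H.Finite) (hHn : ∀ p ∈ H, p.degree ≤ n) {L : Set D[X]} (hL : L.Finite)
    (hLn : ∀ p ∈ L, p.degree < n) : EventuallySignMatching φ l ψ (L ∪ H) := by
  induction H, hH using Set.Finite.induction_on generalizing L with
  | empty => simpa using ih L hL hLn
  | @insert p H _ hH ihH =>
    rw [Set.forall_mem_insert] at hHn
    replace ihH := @ihH hHn.2
    rw [Set.union_insert]
    by_cases hlc : φ p.leadingCoeff = 0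
    · refine EventuallySignMatching.insert_of_eraseLead hl hlc ?_
      rw [← Set.insert_union]
      exact ihH (hL.insert _)
        (Set.forall_mem_insert.2 ⟨degree_eraseLead_lt_of_degree_le hHn.1, hLn⟩)
    have hder : (derivative p).degree < n := by
      refine (degree_derivative_lt ?_).trans_le hHn.1
      rintro rfl
      simp at hlc
    obtain ⟨G, hG, hGn, hGF⟩ := exists_eventuallySignMatching_insert hR hS hl hlc
      ((hL.union hH).insert _) (Set.mem_insert _ (L ∪ H)) (n := n)
      (Set.forall_mem_insert.2 ⟨hder.le, fun f hf => hf.elim (fun h => (hLn f h).le) (hHn.2 f)⟩)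
    refine (hGF ((ihH ((hL.union hG).insert (derivative p)) ?_).mono ?_)).mono
      (Set.insert_subset_insert (Set.subset_insert _ _))
    · exact Set.forall_mem_insert.2 ⟨hder, fun f hf => hf.elim (hLn f) (hGn f)⟩
    · rintro f ((rfl | hf | hf) | hf) <;> simp [*]

theorem eventuallySignMatching_of_finite (hR : HasPolyIVT R) (hS : HasPolyIVT S)
    (hl : ∀ g, ∀ᶠ b in l, SignType.sign (ψ b g) = SignType.sign (φ g)) (hE : E.Finite) :
    EventuallySignMatching φ l ψ E := by
  obtain ⟨n, hn⟩ := (hE.image natDegree).bddAbove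
  suffices ∀ n : ℕ, ∀ L : Set D[X], L.Finite → (∀ p ∈ L, p.degree < n) →
      EventuallySignMatching φ l ψ L by
    refine this (n + 1) E hE fun p hp => degree_le_natDegree.trans_lt ?_
    exact_mod_cast Nat.lt_succ_of_le (hn (Set.mem_image_of_mem _ hp))
  intro n
  induction n with
  | zero =>
    intro L _ hL
    have hL0 : ∀ p ∈ L, p = 0 := by simpa [Nat.WithBot.lt_zero_iff] using hL
    refine Eventually.of_forall fun b => ⟨∅, by simp [IsPartialIso], ?_, ?_, ?_, ?_⟩ <;>
      exact Set.forall_mem_image.2 fun p hp => by simp [hL0 p hp]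
  | succ n ih =>
    intro H hH hHn
    simpa using eventuallySignMatching_union hR hS hl ih hH
      (fun p hp => not_lt.1 fun h => (Nat.WithBot.add_one_le_of_lt h).not_gt (hHn p hp))
      Set.finite_empty (by simp)

end EventualMatching

end Transfer

section RealPoints

variable {R : Type*} [Field R] [LinearOrder R] [IsStrictOrderedRing R]

theorem sign_map_real (φ : ℝ →+* R) (c : ℝ) : SignType.sign (φ c) = SignType.sign c := by
  have hpos : ∀ c : ℝ, 0 < c → 0 < φ c := fun c hc => by
    rw [← Real.mul_self_sqrt hc.le, map_mul]
    exact mul_self_pos.2 ((map_ne_zero φ).2 (Real.sqrt_ne_zero'.2 hc))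
  rcases lt_trichotomy c 0 with h | rfl | h
  · have := hpos (-c) (neg_pos.2 h)
    rw [map_neg, neg_pos] at this
    rw [sign_neg h, sign_neg this]
  · simp
  · rw [sign_pos h, sign_pos (hpos c h)]

theorem exists_filter_forall_eventually {ι B : Type*} {P : ι → B → Prop}
    (h : ∀ s : Finset ι, ∃ b, ∀ i ∈ s, P i b) :
    ∃ l : Filter B, l.NeBot ∧ ∀ i, ∀ᶠ b in l, P i b := by
  classical
  refine ⟨⨅ s : Finset ι, Filter.principal {b | ∀ i ∈ s, P i b},
    Filter.iInf_neBot_of_directed' (fun s t => ⟨s ∪ t, ?_, ?_⟩) fun s =>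
      Filter.principal_neBot_iff.2 (h s), fun i => Filter.mem_iInf_of_mem {i} (by simp)⟩
  · exact Filter.principal_mono.2 fun b hb i hi => hb i (Finset.mem_union_left _ hi)
  · exact Filter.principal_mono.2 fun b hb i hi => hb i (Finset.mem_union_right _ hi)

theorem eval_map_finSuccEquiv {A R : Type*} [CommRing A] [CommRing R] {n : ℕ}
    (φ : MvPolynomial (Fin (n + 1)) A →+* R) (f : MvPolynomial (Fin (n + 1)) A) :
    ((finSuccEquiv A n f).map (φ.comp (rename Fin.succ).toRingHom)).eval (φ (X 0)) = φ f := by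
  rw [AlgHom.toRingHom_eq_coe]
  induction f using MvPolynomial.induction_on with
  | C c => simp [finSuccEquiv_apply]
  | add p q hp hq => simp [hp, hq]
  | mul_X p i hp => cases i using Fin.cases <;> simp [hp, finSuccEquiv_X_zero, finSuccEquiv_X_succ]

theorem exists_real_sign_eval_eq (hR : HasPolyIVT R) {n : ℕ} (φ : MvPolynomial (Fin n) ℝ →+* R)
    {F : Set (MvPolynomial (Fin n) ℝ)} (hF : F.Finite) :
    ∃ b : Fin n → ℝ, ∀ f ∈ F, SignType.sign (eval b f) = SignType.sign (φ f) := by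
  induction n with
  | zero =>
    refine ⟨0, fun f _ => ?_⟩
    rw [eq_C_of_isEmpty f, eval_C]
    exact (sign_map_real (φ.comp C) _).symm
  | succ n ih =>
    obtain ⟨l, _, hl⟩ := exists_filter_forall_eventually fun s =>
      ih (φ.comp (rename Fin.succ).toRingHom) (Finset.finite_toSet s)
    obtain ⟨b, M, hM⟩ := (eventuallySignMatching_of_finite hR HasPolyIVT.real hl
      (hF.image (finSuccEquiv ℝ n))).exists
    obtain ⟨z, hz⟩ := hM.isPartialIso.exists_compat (φ (X 0))
    refine ⟨Fin.cons z b, fun f hf => ?_⟩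
    rw [eval_eq_eval_mv_eval', ← eval_map_finSuccEquiv φ]
    exact (hM.sign_eq _ ⟨_, ⟨f, hf, rfl⟩, rfl⟩ _ z hz).symm

end RealPoints

section Archimedean

section BoundedElements

variable {A : Type*} [CommRing A] [Algebra ℝ A] {T : Subsemiring A}

theorem algebraMap_mem_of_sumSq_le (hT : Subsemiring.sumSq A ≤ T) {c : ℝ} (hc : 0 ≤ c) :
    algebraMap ℝ A c ∈ T := by
  rw [← Real.sq_sqrt hc, map_pow]
  exact sq_mem_of_sumSq_le hT _

/-- The elements of `A` lying between two real constants in the order with nonnegative cone `T`. -/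
def boundedElements (hT : Subsemiring.sumSq A ≤ T) : Subalgebra ℝ A where
  carrier := {a | ∃ k : ℝ, algebraMap ℝ A k + a ∈ T ∧ algebraMap ℝ A k - a ∈ T}
  algebraMap_mem' c := by
    refine ⟨|c|, ?_, ?_⟩
    · rw [← map_add]
      exact algebraMap_mem_of_sumSq_le hT (by linarith [neg_abs_le c])
    · rw [← map_sub]
      exact algebraMap_mem_of_sumSq_le hT (by linarith [le_abs_self c])
  add_mem' := by
    rintro a b ⟨k, hk, hk'⟩ ⟨l, hl, hl'⟩
    refine ⟨k + l, ?_, ?_⟩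
    · convert add_mem hk hl using 1
      rw [map_add]; ring
    · convert add_mem hk' hl' using 1
      rw [map_add]; ring
  mul_mem' := by
    rintro a b ⟨k, hk, hk'⟩ ⟨l, hl, hl'⟩
    have hhalf : algebraMap ℝ A (1 / 2) ∈ T := algebraMap_mem_of_sumSq_le hT (by norm_num)
    have htwo : algebraMap ℝ A (1 / 2) * 2 = 1 := by
      rw [← map_ofNat (algebraMap ℝ A) 2, ← map_mul]
      norm_num
    refine ⟨k * l, ?_, ?_⟩
    · convert mul_mem hhalf (add_mem (mul_mem hk hl) (mul_mem hk' hl')) using 1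
      rw [map_mul]
      linear_combination -(algebraMap ℝ A k * algebraMap ℝ A l + a * b) * htwo
    · convert mul_mem hhalf (add_mem (mul_mem hk hl') (mul_mem hk' hl)) using 1
      rw [map_mul]
      linear_combination -(algebraMap ℝ A k * algebraMap ℝ A l - a * b) * htwo

theorem mem_boundedElements_of_sub_sq_mem (hT : Subsemiring.sumSq A ≤ T) {a : A} {N : ℝ}
    (h : algebraMap ℝ A N - a ^ 2 ∈ T) : a ∈ boundedElements hT := by
  have hfour : algebraMap ℝ A (1 / 4) = algebraMap ℝ A (1 / 2) ^ 2 := by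
    rw [← map_pow]; norm_num
  have htwo : algebraMap ℝ A (1 / 2) * 2 = 1 := by
    rw [← map_ofNat (algebraMap ℝ A) 2, ← map_mul]
    norm_num
  refine ⟨N + 1 / 4, ?_, ?_⟩
  · convert add_mem h (sq_mem_of_sumSq_le hT (a + algebraMap ℝ A (1 / 2))) using 1
    rw [map_add, hfour]
    linear_combination -a * htwo
  · convert add_mem h (sq_mem_of_sumSq_le hT (a - algebraMap ℝ A (1 / 2))) using 1
    rw [map_add, hfour]
    linear_combination a * htwo

/-- Every element of `A` is bounded above by a real constant in the order with nonnegative cone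
`T`. -/
def IsArchimedeanCone (T : Subsemiring A) : Prop := ∀ a, ∃ k : ℝ, algebraMap ℝ A k - a ∈ T

theorem isArchimedeanCone_of_boundedElements_eq_top {hT : Subsemiring.sumSq A ≤ T}
    (h : boundedElements hT = ⊤) : IsArchimedeanCone T := fun a =>
  (h ▸ Algebra.mem_top : a ∈ boundedElements hT).imp fun _ => And.right

theorem IsArchimedeanCone.exists_pos_sub_mem (hT : Subsemiring.sumSq A ≤ T)
    (hA : IsArchimedeanCone T) (a : A) : ∃ k : ℝ, 0 < k ∧ algebraMap ℝ A k - a ∈ T := by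
  obtain ⟨k, hk⟩ := hA a
  have hpos : (0 : ℝ) ≤ |k| + 1 - k := by linarith [le_abs_self k]
  refine ⟨|k| + 1, by positivity, ?_⟩
  convert add_mem hk (algebraMap_mem_of_sumSq_le hT hpos) using 1
  rw [map_sub]; ring

/-- If `f * t = 1 + s`, then a lower bound `-c` of `f` can be improved by a constant which does not
depend on `c`. -/
theorem IsArchimedeanCone.mem_of_mul_eq_one_add (hT : Subsemiring.sumSq A ≤ T)
    (hA : IsArchimedeanCone T) {f s t : A} (hs : s ∈ T) (ht : t ∈ T) (hst : f * t = 1 + s) :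
    f ∈ T := by
  obtain ⟨k, hk, hkt⟩ := hA.exists_pos_sub_mem hT t
  obtain ⟨r, hrf⟩ := hA (-f)
  have hinv : algebraMap ℝ A k⁻¹ * algebraMap ℝ A k = 1 := by
    rw [← map_mul, inv_mul_cancel₀ hk.ne', map_one]
  have descend : ∀ j : ℕ, f + algebraMap ℝ A (j * k⁻¹) ∈ T → f ∈ T := by
    intro j
    induction j with
    | zero => simp
    | succ j ih =>
      refine fun h => ih ?_
      have hc : (0 : ℝ) ≤ (j + 1 : ℕ) * k⁻¹ := by positivity
      convert mul_mem (algebraMap_mem_of_sumSq_le hT (inv_nonneg.2 hk.le))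
        (add_mem (add_mem (mul_mem hkt h) hs) (mul_mem (algebraMap_mem_of_sumSq_le hT hc) ht))
        using 1
      simp only [Nat.cast_add, Nat.cast_one, map_mul, map_add, map_one, map_natCast]
      linear_combination (-f - (j + 1) * algebraMap ℝ A k⁻¹) * hinv + algebraMap ℝ A k⁻¹ * hst
  obtain ⟨j, hj⟩ := exists_nat_ge (r * k)
  have hj' : 0 ≤ j * k⁻¹ - r := sub_nonneg.2 ((le_mul_inv_iff₀ hk).2 hj)
  refine descend j ?_
  convert add_mem hrf (algebraMap_mem_of_sumSq_le hT hj') using 1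
  rw [map_sub]; ring

end BoundedElements

variable {n : ℕ} {T : Subsemiring (MvPolynomial (Fin n) ℝ)} {G : Set (MvPolynomial (Fin n) ℝ)}

theorem isArchimedeanCone_of_C_sub_sum_sq_mem
    (hT : Subsemiring.sumSq (MvPolynomial (Fin n) ℝ) ≤ T) {N : ℝ} (hN : C N - ∑ i, X i ^ 2 ∈ T) :
    IsArchimedeanCone T := by
  refine isArchimedeanCone_of_boundedElements_eq_top (hT := hT) (top_le_iff.1 ?_)
  rw [← adjoin_range_X, Algebra.adjoin_le_iff, Set.range_subset_iff]
  refine fun i => mem_boundedElements_of_sub_sq_mem hT (N := N) ?_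
  convert add_mem hN (sum_mem fun j (_ : j ∈ Finset.univ.erase i) => sq_mem_of_sumSq_le hT (X j))
    using 1
  rw [← Finset.add_sum_erase _ _ (Finset.mem_univ i), algebraMap_eq]
  ring

/-- The basic closed semialgebraic set defined by the inequalities `0 ≤ g` for `g ∈ G`. -/
def nonnegSet (G : Set (MvPolynomial (Fin n) ℝ)) : Set (Fin n → ℝ) := {x | ∀ g ∈ G, 0 ≤ eval x g}

/-- The real Nullstellensatz, in contrapositive form. -/
theorem exists_mem_nonnegSet_eval_ne_zero (hG : G.Finite) {f : MvPolynomial (Fin n) ℝ}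
    (hf : ∀ k, -f ^ (2 * k) ∉ preordering G) : ∃ x ∈ nonnegSet G, eval x f ≠ 0 := by
  obtain ⟨R, _, _, _, φ, hR, hφ, hφf⟩ := exists_ringHom_hasPolyIVT (sumSq_le_preordering G) hf
  obtain ⟨b, hb⟩ := exists_real_sign_eval_eq hR φ (hG.insert f)
  rw [Set.forall_mem_insert] at hb
  refine ⟨b, fun g hg => ?_, ?_⟩
  · rw [← sign_nonneg_iff, hb.2 g hg, sign_nonneg_iff]
    exact hφ g (subset_preordering G hg)
  · rwa [← sign_ne_zero, hb.1, sign_ne_zero]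

/-- The Positivstellensatz of Krivine and Stengle. -/
theorem exists_mul_eq_one_add_of_pos (hG : G.Finite) {f : MvPolynomial (Fin n) ℝ}
    (hf : ∀ x ∈ nonnegSet G, 0 < eval x f) :
    ∃ s ∈ preordering G, ∃ t ∈ preordering G, f * t = 1 + s := by
  by_contra! hcon
  obtain ⟨x, hx, -⟩ := exists_mem_nonnegSet_eval_ne_zero (f := 1) (hG.insert (-f)) fun k hk => by
    obtain ⟨s, hs, t, ht, h⟩ := mem_preordering_insert.1 hk
    rw [one_pow] at h
    exact hcon s hs t ht (by linear_combination h)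
  have hfx : 0 ≤ -eval x f := map_neg (eval x) f ▸ hx _ (Set.mem_insert _ _)
  linarith [hf x fun g hg => hx g (Set.mem_insert_of_mem _ hg)]

theorem exists_nonneg_forall_sum_sq_lt {K : Set (Fin n → ℝ)} (hK : IsCompact K) :
    ∃ N : ℝ, 0 ≤ N ∧ ∀ x ∈ K, ∑ i, x i ^ 2 < N := by
  have hcont : Continuous fun x : Fin n → ℝ => ∑ i, x i ^ 2 := by fun_prop
  obtain ⟨B, hB⟩ := hK.bddAbove_image hcont.continuousOn
  refine ⟨|B| + 1, by positivity, fun x hx => ?_⟩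
  linarith [hB (Set.mem_image_of_mem _ hx), le_abs_self B]

/-- Wörmann's argument: with `p = N - ∑ xᵢ²` positive on the compact set and `p * t = 1 + s`, the
preordering generated by `p` is Archimedean and hence bounds `s`; multiplying this bound by `1 + s`
moves it into the preordering generated by `G`. -/
theorem isArchimedeanCone_preordering (hG : G.Finite) (hK : IsCompact (nonnegSet G)) :
    IsArchimedeanCone (preordering G) := by
  obtain ⟨N, hN0, hN⟩ := exists_nonneg_forall_sum_sq_lt hK
  let p : MvPolynomial (Fin n) ℝ := C N - ∑ i, X i ^ 2
  obtain ⟨s, hs, t, ht, hst⟩ := exists_mul_eq_one_add_of_pos (f := p) hG fun x hx => by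
    simpa [p, sub_pos] using hN x hx
  have hp_arch : IsArchimedeanCone (preordering {p}) :=
    isArchimedeanCone_of_C_sub_sum_sq_mem (sumSq_le_preordering _) (subset_preordering _ rfl)
  obtain ⟨k, hk⟩ := hp_arch s
  obtain ⟨a, b, ha, hb, hab⟩ := mem_preordering_singleton.1 hk
  rw [algebraMap_eq] at hab
  have hT := sumSq_le_preordering G
  rw [← Subsemiring.mem_sumSq] at ha hb
  have hp : p * (1 + s) ∈ preordering G := by
    rw [← hst, ← mul_assoc, ← pow_two]
    exact mul_mem (sq_mem_of_sumSq_le hT p) ht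
  have hks : (C k - s) * (1 + s) ∈ preordering G := by
    convert add_mem (mul_mem (hT ha) (add_mem (one_mem _) hs)) (mul_mem (hT hb) hp) using 1
    rw [hab]; ring
  have hs_bdd : C (k + (k / 2) ^ 2) - s ∈ preordering G := by
    have hhalf : (C (k / 2) * 2 : MvPolynomial (Fin n) ℝ) = C k := by
      rw [mul_two, ← map_add, add_halves]
    convert add_mem hks (sq_mem_of_sumSq_le hT (s - C (k / 2))) using 1
    rw [map_add, map_pow]
    linear_combination s * hhalf
  have hpN : p + C N * s ∈ preordering G := by
    convert add_mem hp (mul_mem hs (sum_mem fun i (_ : i ∈ Finset.univ) =>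
      sq_mem_of_sumSq_le hT (X i))) using 1
    ring
  refine isArchimedeanCone_of_C_sub_sum_sq_mem (N := N + N * (k + (k / 2) ^ 2)) hT ?_
  convert add_mem hpN (mul_mem (algebraMap_mem_of_sumSq_le hT hN0) hs_bdd) using 1
  simp only [p, algebraMap_eq, map_add, map_mul]
  ring

/-- Schmüdgen's Positivstellensatz. -/
theorem mem_preordering_of_pos (hG : G.Finite) (hK : IsCompact (nonnegSet G))
    {f : MvPolynomial (Fin n) ℝ} (hf : ∀ x ∈ nonnegSet G, 0 < eval x f) : f ∈ preordering G := by
  obtain ⟨s, hs, t, ht, hst⟩ := exists_mul_eq_one_add_of_pos hG hf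
  exact (isArchimedeanCone_preordering hG hK).mem_of_mul_eq_one_add (sumSq_le_preordering G)
    hs ht hst

end Archimedean

section LocalGlobal

variable {n : ℕ} {K : Set (Fin n → ℝ)} {G : Set (MvPolynomial (Fin n) ℝ)}

theorem exists_mvPolynomial_near (hK : IsCompact K) {f : (Fin n → ℝ) → ℝ} (hf : ContinuousOn f K)
    {ε : ℝ} (hε : 0 < ε) : ∃ p : MvPolynomial (Fin n) ℝ, ∀ x ∈ K, |eval x p - f x| < ε := by
  have := isCompact_iff_compactSpace.1 hK
  let φ : MvPolynomial (Fin n) ℝ →ₐ[ℝ] C(K, ℝ) :=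
    aeval fun i => ⟨fun x => x.1 i, (continuous_apply i).comp continuous_subtype_val⟩
  have hφ : ∀ p x, φ p x = eval x.1 p := by
    intro p x
    induction p using MvPolynomial.induction_on with
    | C c => simp [φ]
    | add p q hp hq => simp [hp, hq]
    | mul_X p i hp => simp [hp, φ]
  have hsep : φ.range.SeparatesPoints := by
    intro x y hxy
    obtain ⟨i, hi⟩ := Function.ne_iff.1 (Subtype.coe_ne_coe.2 hxy)
    exact ⟨_, ⟨_, ⟨X i, rfl⟩, rfl⟩, by simpa [φ] using hi⟩
  obtain ⟨⟨_, p, rfl⟩, hp⟩ :=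
    ContinuousMap.exists_mem_subalgebra_near_continuous_of_separatesPoints φ.range hsep
      (fun x : K => f x) (continuousOn_iff_continuous_domRestrict.1 hf) ε hε
  exact ⟨p, fun x hx => hφ p ⟨x, hx⟩ ▸ hp ⟨x, hx⟩⟩

theorem exists_mvPolynomial_mul_near (hK : IsCompact K) {f w : (Fin n → ℝ) → ℝ}
    (hf : ContinuousOn f K) (hw : ContinuousOn w K) {ε : ℝ} (hε : 0 < ε) :
    ∃ p : MvPolynomial (Fin n) ℝ, ∀ x ∈ K, |eval x p - f x| * w x < ε := by
  obtain ⟨M, hM⟩ := hK.bddAbove_image hw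
  obtain ⟨p, hp⟩ := exists_mvPolynomial_near hK hf (ε := ε / (|M| + 1)) (by positivity)
  refine ⟨p, fun x hx => ?_⟩
  have hwM : w x < |M| + 1 := by
    linarith [hM (Set.mem_image_of_mem _ hx), le_abs_self M]
  calc |eval x p - f x| * w x
      ≤ |eval x p - f x| * (|M| + 1) := by gcongr
    _ < ε / (|M| + 1) * (|M| + 1) := by gcongr; exact hp x hx
    _ = ε := div_mul_cancel₀ _ (by positivity)

theorem eval_nonneg_of_mem_preordering {f : MvPolynomial (Fin n) ℝ} (hf : f ∈ preordering G)
    {x : Fin n → ℝ} (hx : x ∈ nonnegSet G) : 0 ≤ eval x f := by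
  have hsum : Subsemiring.sumSq _ ≤ (Subsemiring.nonneg ℝ).comap (eval x) := by
    rw [← Subsemiring.closure_isSquare, Subsemiring.closure_le]
    exact fun s hs => (hs.map (eval x)).nonneg
  exact sup_le hsum (Subsemiring.closure_le.2 hx) hf

/-- With `s = h + g`, the exact continuous solution is `σ = τ = 1 / s`, that is `σ = a + r * g` and
`τ = b - r * h` for `r = (b - a) / s`; the polynomials come from approximating this `r`. -/
theorem exists_pos_mul_add_mul_eq_one (hK : IsCompact K) {h g a b : MvPolynomial (Fin n) ℝ}
    (hh : ∀ x ∈ K, 0 ≤ eval x h) (hg : ∀ x ∈ K, 0 ≤ eval x g) (hab : a * h + b * g = 1) :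
    ∃ σ τ : MvPolynomial (Fin n) ℝ, (∀ x ∈ K, 0 < eval x σ) ∧ (∀ x ∈ K, 0 < eval x τ) ∧
      σ * h + τ * g = 1 := by
  have habx : ∀ x, eval x a * eval x h + eval x b * eval x g = 1 := fun x => by
    simpa using congrArg (eval x) hab
  let s : (Fin n → ℝ) → ℝ := fun x => eval x h + eval x g
  have hs : Continuous s := (continuous_eval h).add (continuous_eval g)
  have hspos : ∀ x ∈ K, 0 < s x := fun x hx => by
    refine (add_nonneg (hh x hx) (hg x hx)).lt_of_ne' fun hzero => ?_
    obtain ⟨hhx, hgx⟩ := (add_eq_zero_iff_of_nonneg (hh x hx) (hg x hx)).1 hzero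
    simpa [hhx, hgx] using habx x
  have hrcont : ContinuousOn (fun x => (eval x b - eval x a) / s x) K :=
    ((continuous_eval b).sub (continuous_eval a)).continuousOn.div hs.continuousOn
      fun x hx => (hspos x hx).ne'
  obtain ⟨r, hr⟩ := exists_mvPolynomial_mul_near hK hrcont (hs.pow 2).continuousOn one_pos
  have hpert : ∀ x ∈ K, ∀ u, |u| ≤ s x →
      0 < 1 / s x + u * (eval x r - (eval x b - eval x a) / s x) := fun x hx u hu => by
    set d := eval x r - (eval x b - eval x a) / s x
    have hsmall : |u * d| < 1 / s x := by
      rw [lt_div_iff₀ (hspos x hx)]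
      calc |u * d| * s x
          ≤ s x * |d| * s x := by
            rw [abs_mul]
            have hsx := (hspos x hx).le
            gcongr
        _ = |d| * s x ^ 2 := by ring
        _ < 1 := hr x hx
    linarith [neg_abs_le (u * d)]
  refine ⟨a + r * g, b - r * h, fun x hx => ?_, fun x hx => ?_, by linear_combination hab⟩
  · convert hpert x hx (eval x g) (by rw [abs_of_nonneg (hg x hx)]; linarith [hh x hx]) using 1
    rw [map_add, map_mul]
    have hsx := (hspos x hx).ne'
    field_simp
    linear_combination habx x
  · convert hpert x hx (-eval x h) (by rw [abs_neg, abs_of_nonneg (hh x hx)]; linarith [hg x hx])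
      using 1
    rw [map_sub, map_mul]
    have hsx := (hspos x hx).ne'
    field_simp
    linear_combination habx x

theorem mem_preordering_of_eq_add_mul_sq (hG : G.Finite) (hK : IsCompact (nonnegSet G))
    {h t c : MvPolynomial (Fin n) ℝ} (hh : ∀ x ∈ nonnegSet G, 0 ≤ eval x h)
    (ht : t ∈ preordering G) (htc : h = t + c * h ^ 2) : h ∈ preordering G := by
  have hgt : h * (1 - c * h) = t := by linear_combination htc
  have hg : ∀ x ∈ nonnegSet G, 0 ≤ eval x (1 - c * h) := fun x hx => by
    rcases (hh x hx).eq_or_lt with hzero | hpos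
    · simp [← hzero]
    · refine nonneg_of_mul_nonneg_right ?_ hpos
      rw [← map_mul, hgt]
      exact eval_nonneg_of_mem_preordering ht hx
  obtain ⟨σ, τ, hσ, hτ, hστ⟩ := exists_pos_mul_add_mul_eq_one (a := c) (b := 1) hK hh hg (by ring)
  have hrepr : h = σ * h ^ 2 + τ * t := by linear_combination (-h) * hστ + τ * hgt
  rw [hrepr]
  exact add_mem
    (mul_mem (mem_preordering_of_pos hG hK hσ) (sq_mem_of_sumSq_le (sumSq_le_preordering G) h))
    (mul_mem (mem_preordering_of_pos hG hK hτ) ht)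

end LocalGlobal

section LocalSumSq

open scoped Matrix

variable {A ι : Type*} [CommRing A]

theorem exists_eq_sum_mul_of_mem_mul_span_range [Fintype ι] {I : Ideal A} {w : ι → A} {g : A}
    (hg : g ∈ I * Ideal.span (Set.range w)) : ∃ b : ι → A, (∀ i, b i ∈ I) ∧ g = ∑ i, b i * w i := by
  rw [← smul_eq_mul, Ideal.span, Submodule.mem_ideal_smul_span_iff_exists_sum] at hg
  obtain ⟨b, hb, rfl⟩ := hg
  exact ⟨b, hb, Finsupp.sum_fintype _ _ (by simp)⟩

theorem span_range_mulVec_le [Fintype ι] (M : Matrix ι ι A) (y : ι → A) :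
    Ideal.span (Set.range (M *ᵥ y)) ≤ Ideal.span (Set.range y) := by
  rw [Ideal.span_le]
  rintro _ ⟨k, rfl⟩
  exact sum_mem fun i _ => Ideal.mul_mem_left _ _ (Ideal.subset_span ⟨i, rfl⟩)

theorem span_range_mulVec_of_isUnit [Fintype ι] [DecidableEq ι] {M : Matrix ι ι A} (hM : IsUnit M)
    (y : ι → A) : Ideal.span (Set.range (M *ᵥ y)) = Ideal.span (Set.range y) := by
  refine (span_range_mulVec_le M y).antisymm ?_
  have hinv : M⁻¹ *ᵥ (M *ᵥ y) = y := by
    rw [Matrix.mulVec_mulVec, Matrix.nonsing_inv_mul M ((Matrix.isUnit_iff_isUnit_det M).1 hM),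
      Matrix.one_mulVec]
  simpa only [hinv] using span_range_mulVec_le M⁻¹ (M *ᵥ y)

theorem exists_sumSq_sub_mem_iInf [Finite ι] {I : ι → Ideal A}
    (hI : Pairwise (Function.onFun IsCoprime I)) {h : A}
    (hh : ∀ i, ∃ σ ∈ Subsemiring.sumSq A, h - σ ∈ I i) :
    ∃ σ ∈ Subsemiring.sumSq A, h - σ ∈ ⨅ i, I i := by
  classical
  have := Fintype.ofFinite ι
  choose σ hσ hmem using hh
  choose e he using fun i => Ideal.exists_forall_sub_mem_ideal hI (Pi.single i (1 : A))
  refine ⟨∑ i, e i ^ 2 * σ i,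
    sum_mem fun i _ => mul_mem (sq_mem_of_sumSq_le le_rfl (e i)) (hσ i),
    Ideal.mem_iInf.2 fun j => ?_⟩
  have hej : Ideal.Quotient.mk (I j) (e j) = 1 := by
    rw [Ideal.Quotient.eq.2 (he j j), Pi.single_eq_same, map_one]
  have hei : ∀ i, i ≠ j → Ideal.Quotient.mk (I j) (e i) = 0 := fun i hij => by
    rw [Ideal.Quotient.eq.2 (he i j), Pi.single_eq_of_ne' hij, map_zero]
  rw [← Ideal.Quotient.eq, Ideal.Quotient.eq.2 (hmem j), map_sum, Finset.sum_eq_single j]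
  · rw [map_mul, map_pow, hej, one_pow, one_mul]
  · intro i _ hij
    rw [map_mul, map_pow, hei i hij, zero_pow two_ne_zero, zero_mul]
  · exact fun hj => absurd (Finset.mem_univ j) hj

theorem iInf_pow_le_iInf_pow_of_pairwise_isCoprime [Finite ι] {I : ι → Ideal A}
    (hI : Pairwise (Function.onFun IsCoprime I)) (N : ℕ) : ⨅ i, I i ^ N ≤ (⨅ i, I i) ^ N := by
  have := Fintype.ofFinite ι
  have hprod := Ideal.prod_eq_iInf_of_pairwise_isCoprime (J := fun i => I i ^ N)
    (s := Finset.univ) fun i _ j _ hij => (hI hij).pow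
  have hprod' := Ideal.prod_eq_iInf_of_pairwise_isCoprime (s := Finset.univ) (hI.set_pairwise _)
  simp only [Finset.mem_univ, iInf_pos] at hprod hprod'
  rw [← hprod, ← hprod', Finset.prod_pow]

open scoped Matrix.Norms.L2Operator MatrixOrder in
theorem exists_isUnit_eq_transpose_mul_self_of_posDef [Fintype ι] [DecidableEq ι]
    {H : Matrix ι ι ℝ} (hH : H.PosDef) : ∃ B : Matrix ι ι ℝ, IsUnit B ∧ H = Bᵀ * B := by
  obtain ⟨B, hB⟩ := CStarAlgebra.nonneg_iff_eq_star_mul_self.mp hH.posSemidef.nonneg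
  rw [Matrix.star_eq_conjTranspose, Matrix.conjTranspose_eq_transpose_of_trivial] at hB
  refine ⟨B, ?_, hB⟩
  have hunit := hH.isUnit
  rw [hB, Matrix.isUnit_iff_isUnit_det, Matrix.det_mul] at hunit
  exact (Matrix.isUnit_iff_isUnit_det B).2 (isUnit_of_mul_isUnit_right hunit)

variable [Algebra ℝ A] [Fintype ι]

theorem algebraMap_mul_sum_sq_add_sum_mul (w b : ι → A) {ε : ℝ} (hε : ε ≠ 0) :
    algebraMap ℝ A ε * ∑ i, w i ^ 2 + ∑ i, b i * w i =
      algebraMap ℝ A (ε / 2) * ∑ i, (w i + algebraMap ℝ A ε⁻¹ * b i) ^ 2 +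
        (algebraMap ℝ A (ε / 2) * ∑ i, w i ^ 2 - algebraMap ℝ A (ε⁻¹ / 2) * ∑ i, b i ^ 2) := by
  have htwo : algebraMap ℝ A (1 / 2) * 2 = 1 := by
    rw [← map_ofNat (algebraMap ℝ A) 2, ← map_mul]
    norm_num
  have hinv : algebraMap ℝ A ε * algebraMap ℝ A ε⁻¹ = 1 := by
    rw [← map_mul, mul_inv_cancel₀ hε, map_one]
  have hhalf : ∀ c : ℝ, algebraMap ℝ A (c / 2) = algebraMap ℝ A c * algebraMap ℝ A (1 / 2) :=
    fun c => by rw [← map_mul, mul_one_div]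
  rw [hhalf ε, hhalf ε⁻¹]
  simp only [Finset.mul_sum, ← Finset.sum_add_distrib, ← Finset.sum_sub_distrib]
  refine Finset.sum_congr rfl fun i _ => ?_
  linear_combination
    (-(algebraMap ℝ A ε * w i ^ 2) - b i * w i * algebraMap ℝ A ε * algebraMap ℝ A ε⁻¹) * htwo -
      (b i * w i + algebraMap ℝ A ε⁻¹ * algebraMap ℝ A (1 / 2) * b i ^ 2) * hinv

/-- Completing the square absorbs an error `g` of order `k`, at the price of a new error of order
`2 * (k - 1) > k` and of half of `ε`. -/
theorem exists_sumSq_sub_mem_span_pow (w : ι → A) (N : ℕ) {k : ℕ} (hk : 3 ≤ k) {ε : ℝ}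
    (hε : 0 < ε) {g : A} (hg : g ∈ Ideal.span (Set.range w) ^ k) :
    ∃ σ ∈ Subsemiring.sumSq A,
      algebraMap ℝ A ε * ∑ i, w i ^ 2 + g - σ ∈ Ideal.span (Set.range w) ^ N := by
  have hquad : ∀ {c : ℝ} (_ : 0 ≤ c) (f : ι → A),
      algebraMap ℝ A c * ∑ i, f i ^ 2 ∈ Subsemiring.sumSq A := fun hc f =>
    mul_mem (algebraMap_mem_of_sumSq_le le_rfl hc)
      (sum_mem fun i _ => sq_mem_of_sumSq_le le_rfl (f i))
  obtain ⟨d, hd⟩ : ∃ d, N ≤ k + d := ⟨N, by lia⟩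
  induction d generalizing k ε g with
  | zero =>
    refine ⟨_, hquad hε.le w, ?_⟩
    rw [add_sub_cancel_left]
    exact Ideal.pow_le_pow_right (by lia) hg
  | succ d ih =>
    obtain ⟨b, hb, rfl⟩ : ∃ b : ι → A, (∀ i, b i ∈ Ideal.span (Set.range w) ^ (k - 1)) ∧
        g = ∑ i, b i * w i := by
      refine exists_eq_sum_mul_of_mem_mul_span_range ?_
      rwa [← pow_succ, Nat.sub_add_cancel (by lia)]
    have herr : -(algebraMap ℝ A (ε⁻¹ / 2) * ∑ i, b i ^ 2) ∈
        Ideal.span (Set.range w) ^ (k + 1) := by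
      refine neg_mem (Ideal.mul_mem_left _ _ (sum_mem fun i _ => ?_))
      refine Ideal.pow_le_pow_right (?_ : k + 1 ≤ (k - 1) * 2) ?_
      · lia
      · rw [pow_mul]
        exact Ideal.pow_mem_pow (hb i) 2
    obtain ⟨σ, hσ, hmem⟩ := ih (by lia) (half_pos hε) herr (by lia)
    refine ⟨_, add_mem (hquad (half_pos hε).le fun i => w i + algebraMap ℝ A ε⁻¹ * b i) hσ, ?_⟩
    rw [← sub_eq_add_neg] at hmem
    rwa [algebraMap_mul_sum_sq_add_sum_mul w b hε.ne', add_sub_add_left_eq_sub]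

theorem exists_sumSq_sub_mem_span_pow_of_posDef {H : Matrix ι ι ℝ} (hH : H.PosDef) (y : ι → A)
    (N : ℕ) {h : A}
    (hh : h - y ⬝ᵥ H.map (algebraMap ℝ A) *ᵥ y ∈ Ideal.span (Set.range y) ^ 3) :
    ∃ σ ∈ Subsemiring.sumSq A, h - σ ∈ Ideal.span (Set.range y) ^ N := by
  classical
  obtain ⟨B, hB, rfl⟩ := exists_isUnit_eq_transpose_mul_self_of_posDef hH
  let M : Matrix ι ι A := B.map (algebraMap ℝ A)
  have hM : IsUnit M := hB.map (algebraMap ℝ A).mapMatrix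
  have hform : y ⬝ᵥ (Bᵀ * B).map (algebraMap ℝ A) *ᵥ y = ∑ k, (M *ᵥ y) k ^ 2 := by
    rw [Matrix.map_mul, ← Matrix.mulVec_mulVec, Matrix.transpose_map,
      Matrix.dotProduct_transpose_mulVec]
    exact Finset.sum_congr rfl fun k _ => (pow_two _).symm
  rw [hform, ← span_range_mulVec_of_isUnit hM] at hh
  obtain ⟨σ, hσ, hmem⟩ := exists_sumSq_sub_mem_span_pow (M *ᵥ y) N le_rfl one_pos hh
  refine ⟨σ, hσ, ?_⟩
  rwa [span_range_mulVec_of_isUnit hM, map_one, one_mul, add_sub_cancel] at hmem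

end LocalSumSq

section Hessian

open scoped Matrix

variable {σ K : Type*} [Field K]

theorem X_sub_C_mem_vanishingIdeal_singleton (z : σ → K) (i : σ) :
    X i - C (z i) ∈ vanishingIdeal K {z} := by
  simp [aeval_eq_eval]

theorem isCoprime_vanishingIdeal_singleton {z w : σ → K} (h : z ≠ w) :
    IsCoprime (vanishingIdeal K {z}) (vanishingIdeal K {w}) := by
  refine Ideal.isCoprime_of_isMaximal fun heq => h (funext fun i => ?_)
  have hmem := heq ▸ X_sub_C_mem_vanishingIdeal_singleton z i
  rw [mem_vanishingIdeal_singleton_iff] at hmem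
  simpa [aeval_eq_eval, sub_eq_zero, eq_comm] using hmem

theorem vanishingIdeal_singleton_eq_span (z : σ → K) :
    vanishingIdeal K {z} = Ideal.span (Set.range fun i => X i - C (z i)) := by
  refine le_antisymm (fun f hf => ?_) (Ideal.span_le.2 ?_)
  · have hsub : ∀ p : MvPolynomial σ K,
        p - C (eval z p) ∈ Ideal.span (Set.range fun i => X i - C (z i)) := fun p => by
      induction p using MvPolynomial.induction_on with
      | C c => simp
      | add p q hp hq =>
        convert add_mem hp hq using 1
        rw [map_add, map_add]
        ring
      | mul_X p i hp =>
        convert add_mem (Ideal.mul_mem_right (X i) _ hp) (Ideal.mul_mem_left _ (C (eval z p))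
          (Ideal.subset_span (Set.mem_range_self i))) using 1
        rw [map_mul, map_mul, eval_X]
        ring
    rw [mem_vanishingIdeal_singleton_iff, aeval_eq_eval] at hf
    replace hf : eval z f = 0 := hf
    simpa [hf] using hsub f
  · rintro _ ⟨i, rfl⟩
    exact X_sub_C_mem_vanishingIdeal_singleton z i

/-- The Hessian matrix of `h` at `z`. -/
noncomputable def hessian (h : MvPolynomial σ K) (z : σ → K) : Matrix σ σ K :=
  Matrix.of fun i j => eval z (pderiv i (pderiv j h))

theorem hasDerivAt_eval_update [DecidableEq σ] (p : MvPolynomial σ ℝ) (z : σ → ℝ) (i : σ) :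
    HasDerivAt (fun t => eval (Function.update z i t) p) (eval z (pderiv i p)) (z i) := by
  induction p using MvPolynomial.induction_on with
  | C c => simpa using hasDerivAt_const (z i) c
  | add p q hp hq => simpa using hp.fun_add hq
  | mul_X p j hp =>
    have hprod := hp.fun_mul (hasDerivAt_pi.1 (hasDerivAt_update z i (z i)) j)
    have hleibniz : eval z (pderiv i (p * X j)) =
        eval z (pderiv i p) * z j + eval z p * (Pi.single i 1 : σ → ℝ) j := by
      simp [pderiv_X, Pi.single_apply, apply_ite (eval z), add_comm, mul_comm]
    simpa only [map_mul, eval_X, hleibniz, Function.update_eq_self] using hprod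

theorem eval_pderiv_eq_zero_of_isLocalMin {p : MvPolynomial σ ℝ} {z : σ → ℝ}
    (hz : IsLocalMin (fun x => eval x p) z) (i : σ) : eval z (pderiv i p) = 0 := by
  classical
  have hcont : Filter.Tendsto (Function.update z i) (nhds (z i)) (nhds z) := by
    simpa using ((continuous_const (y := z)).update i continuous_id).tendsto (z i)
  have hmin : IsLocalMin (fun t => eval (Function.update z i t) p) (z i) := by
    filter_upwards [hcont.eventually hz] with t ht
    simpa using ht
  exact hmin.hasDerivAt_eq_zero (hasDerivAt_eval_update p z i)

variable [Fintype σ]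

theorem exists_eq_sum_mul_X_sub_C {h : MvPolynomial σ K} {z : σ → K} (hz : eval z h = 0) :
    ∃ g : σ → MvPolynomial σ K, h = ∑ i, g i * (X i - C (z i)) := by
  have hmem : h ∈ ⊤ * Ideal.span (Set.range fun i => X i - C (z i)) := by
    rwa [Ideal.top_mul, ← vanishingIdeal_singleton_eq_span, mem_vanishingIdeal_singleton_iff,
      aeval_eq_eval]
  obtain ⟨g, -, hg⟩ := exists_eq_sum_mul_of_mem_mul_span_range hmem
  exact ⟨g, hg⟩

theorem eval_pderiv_sum_mul_X_sub_C (g : σ → MvPolynomial σ K) (z : σ → K) (j : σ) :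
    eval z (pderiv j (∑ i, g i * (X i - C (z i)))) = eval z (g j) := by
  classical
  simp [pderiv_X, Pi.single_apply, apply_ite (eval z)]

theorem eval_pderiv_pderiv_sum_mul_X_sub_C (g : σ → MvPolynomial σ K) (z : σ → K) (i j : σ) :
    eval z (pderiv i (pderiv j (∑ k, g k * (X k - C (z k))))) =
      eval z (pderiv i (g j)) + eval z (pderiv j (g i)) := by
  classical
  simp [pderiv_X, Pi.single_apply, Finset.sum_add_distrib]

theorem exists_two_mul_eq_dotProduct_mulVec {h : MvPolynomial σ K} {z : σ → K} (hz : eval z h = 0)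
    (hgrad : ∀ i, eval z (pderiv i h) = 0) :
    ∃ S : Matrix σ σ (MvPolynomial σ K), S.map (eval z) = hessian h z ∧
      2 * h = (fun i => X i - C (z i)) ⬝ᵥ S *ᵥ fun i => X i - C (z i) := by
  obtain ⟨g, hg⟩ := exists_eq_sum_mul_X_sub_C hz
  have hgz : ∀ i, eval z (g i) = 0 := fun i => by
    rw [← eval_pderiv_sum_mul_X_sub_C, ← hg, hgrad]
  choose B hB using fun i => exists_eq_sum_mul_X_sub_C (hgz i)
  have hBz : ∀ i j, eval z (pderiv i (g j)) = eval z (B j i) := fun i j => by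
    rw [hB j, eval_pderiv_sum_mul_X_sub_C]
  refine ⟨Matrix.of B + (Matrix.of B)ᵀ, ?_, ?_⟩
  · ext i j
    rw [hessian, Matrix.of_apply, hg, eval_pderiv_pderiv_sum_mul_X_sub_C, hBz, hBz, add_comm]
    exact map_add (eval z) _ _
  · have hform : h = (fun i => X i - C (z i)) ⬝ᵥ Matrix.of B *ᵥ fun i => X i - C (z i) := by
      rw [hg]
      exact Finset.sum_congr rfl fun k _ => by rw [mul_comm, hB k]; rfl
    rw [Matrix.add_mulVec, dotProduct_add, Matrix.dotProduct_transpose_mulVec, ← hform, two_mul]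

theorem exists_sumSq_sub_mem_vanishingIdeal_singleton_pow {σ : Type*} [Finite σ]
    {h : MvPolynomial σ ℝ} {z : σ → ℝ} (hz : eval z h = 0) (hgrad : ∀ i, eval z (pderiv i h) = 0)
    (hH : (hessian h z).PosDef) (N : ℕ) :
    ∃ s ∈ Subsemiring.sumSq (MvPolynomial σ ℝ), h - s ∈ vanishingIdeal ℝ {z} ^ N := by
  have := Fintype.ofFinite σ
  obtain ⟨S, hS, hSh⟩ := exists_two_mul_eq_dotProduct_mulVec hz hgrad
  have hcubic : 2 * h - (fun i => X i - C (z i)) ⬝ᵥ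
      (hessian h z).map (algebraMap ℝ (MvPolynomial σ ℝ)) *ᵥ (fun i => X i - C (z i)) ∈
        Ideal.span (Set.range fun i => X i - C (z i)) ^ 3 := by
    rw [hSh, ← dotProduct_sub, ← Matrix.sub_mulVec, ← vanishingIdeal_singleton_eq_span, pow_succ',
      pow_two, ← hS]
    refine sum_mem fun i _ => Ideal.mul_mem_mul (X_sub_C_mem_vanishingIdeal_singleton z i)
      (sum_mem fun j _ => Ideal.mul_mem_mul ?_ (X_sub_C_mem_vanishingIdeal_singleton z j))
    simp [aeval_eq_eval]
  obtain ⟨s, hs, hmem⟩ := exists_sumSq_sub_mem_span_pow_of_posDef hH _ N hcubic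
  rw [← vanishingIdeal_singleton_eq_span] at hmem
  refine ⟨C (1 / 2) * s, mul_mem (algebraMap_mem_of_sumSq_le le_rfl (by norm_num)) hs, ?_⟩
  have hhalf : (C (1 / 2) * 2 : MvPolynomial σ ℝ) = 1 := by
    rw [← map_ofNat C 2, ← map_mul]
    norm_num
  convert Ideal.mul_mem_left _ (C (1 / 2)) hmem using 1
  linear_combination (-h) * hhalf

end Hessian

section Support

variable {A : Type*} [CommRing A] {T : Subsemiring A}

/-- The support `T ∩ -T` of the preordering `T`. -/
def supportIdeal (hT : Subsemiring.sumSq A ≤ T) (htwo : IsUnit (2 : A)) : Ideal A where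
  __ := T.toAddSubmonoid.support
  smul_mem' c a ha := by
    obtain ⟨e, he⟩ := htwo.exists_right_inv
    have hcomb : ∀ b ∈ T, -b ∈ T → c * b ∈ T := fun b hb hb' => by
      convert add_mem (mul_mem (sq_mem_of_sumSq_le hT (e * (c + 1))) hb)
        (mul_mem (sq_mem_of_sumSq_le hT (e * (c - 1))) hb') using 1
      linear_combination (-c * b * (2 * e + 1)) * he
    refine ⟨hcomb a ha.1 ha.2, ?_⟩
    have hneg : -(c * a) ∈ T := by
      rw [← mul_neg]
      exact hcomb (-a) ha.2 (by rw [neg_neg]; exact ha.1)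
    exact hneg

theorem exists_forall_vanishingIdeal_pow_mem_preordering {n : ℕ}
    {G : Set (MvPolynomial (Fin n) ℝ)} (hG : G.Finite) :
    ∃ N, ∀ a ∈ vanishingIdeal ℝ (nonnegSet G) ^ N, a ∈ preordering G := by
  have hT := sumSq_le_preordering G
  have htwo : IsUnit (2 : MvPolynomial (Fin n) ℝ) := by
    rw [← map_ofNat C 2]
    exact (IsUnit.mk0 (2 : ℝ) two_ne_zero).map C
  have hrad : vanishingIdeal ℝ (nonnegSet G) ≤ (supportIdeal hT htwo).radical := by
    intro f hf
    by_contra hcon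
    obtain ⟨x, hx, hfx⟩ := exists_mem_nonnegSet_eval_ne_zero (f := f) hG
      fun k hk => hcon ⟨2 * k, even_pow_mem_of_sumSq_le hT f k, hk⟩
    exact hfx (hf x hx)
  obtain ⟨N, hN⟩ := Ideal.exists_pow_le_of_le_radical_of_fg hrad (IsNoetherian.noetherian _)
  exact ⟨N, fun a ha => (hN ha).1⟩

end Support

theorem scheiderer_representation_general {n : ℕ} {G : Set (MvPolynomial (Fin n) ℝ)}
    (hG : G.Finite) (hK : IsCompact (nonnegSet G)) {h : MvPolynomial (Fin n) ℝ}
    (hh : ∀ x ∈ nonnegSet G, 0 ≤ eval x h) (hfin : {x ∈ nonnegSet G | eval x h = 0}.Finite)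
    (hgrad : ∀ z ∈ nonnegSet G, eval z h = 0 → ∀ i, eval z (pderiv i h) = 0)
    (hhess : ∀ z ∈ nonnegSet G, eval z h = 0 → (hessian h z).PosDef) : h ∈ preordering G := by
  let Z := {x ∈ nonnegSet G | eval x h = 0}
  have hZ : nonnegSet (insert (-h ^ 2) G) = Z := by
    ext x
    simp only [Z, nonnegSet, Set.forall_mem_insert, Set.mem_ofPred_eq, map_neg, map_pow,
      Left.nonneg_neg_iff, sq_nonpos_iff, and_comm]
  obtain ⟨N, hN⟩ := exists_forall_vanishingIdeal_pow_mem_preordering (hG.insert (-h ^ 2))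
  have := hfin.to_subtype
  have hcop : Pairwise (Function.onFun IsCoprime fun z : Z => vanishingIdeal ℝ {z.1}) :=
    fun z w hzw => isCoprime_vanishingIdeal_singleton (Subtype.coe_ne_coe.2 hzw)
  have hinf : ⨅ z : Z, vanishingIdeal ℝ {z.1} ≤ vanishingIdeal ℝ Z := fun f hf z hz =>
    (mem_vanishingIdeal_singleton_iff _ _).1 (Ideal.mem_iInf.1 hf ⟨z, hz⟩)
  obtain ⟨σ, hσ, hmem⟩ := exists_sumSq_sub_mem_iInf (fun z w hzw => (hcop hzw).pow) fun z : Z =>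
    exists_sumSq_sub_mem_vanishingIdeal_singleton_pow z.2.2 (hgrad z z.2.1 z.2.2)
      (hhess z z.2.1 z.2.2) N
  obtain ⟨s, hs, t, _, hst⟩ := mem_preordering_insert.1 <| hN _ <|
    hZ ▸ Ideal.pow_right_mono hinf N (iInf_pow_le_iInf_pow_of_pairwise_isCoprime hcop N hmem)
  exact mem_preordering_of_eq_add_mul_sq hG hK hh (add_mem (sumSq_le_preordering G hσ) hs) (c := -t)
    (by linear_combination hst)

/-- Scheiderer's representation: if `K = {q ≥ 0}` is compact, `h` is nonnegative on
`K` with finitely many zeros, all interior to `K`, and the Hessian of `h` is positive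
definite at each zero, then `h = σ₀ + σ₁·q` with `σ₀, σ₁` sums of squares. -/
theorem scheiderer_representation (m : ℕ) (q h : MvPolynomial (Fin m) ℝ)
    (hKcomp : IsCompact {x : Fin m → ℝ | 0 ≤ eval x q})
    (hnn : ∀ x ∈ {x : Fin m → ℝ | 0 ≤ eval x q}, 0 ≤ eval x h)
    (hfin : {x : Fin m → ℝ | 0 ≤ eval x q ∧ eval x h = 0}.Finite)
    (hint : {x : Fin m → ℝ | 0 ≤ eval x q ∧ eval x h = 0} ⊆
        interior {x : Fin m → ℝ | 0 ≤ eval x q})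
    (hhess : ∀ z ∈ {x : Fin m → ℝ | 0 ≤ eval x q ∧ eval x h = 0},
        (Matrix.of fun i j : Fin m => eval z (pderiv i (pderiv j h))).PosDef) :
    ∃ σ0 σ1 : MvPolynomial (Fin m) ℝ,
      IsSumSq σ0 ∧ IsSumSq σ1 ∧ h = σ0 + σ1 * q := by
  have hK : nonnegSet {q} = {x | 0 ≤ eval x q} := by simp [nonnegSet]
  rw [← hK] at hKcomp hnn hint
  refine mem_preordering_singleton.1 <| scheiderer_representation_general (Set.finite_singleton q)
    hKcomp hnn (by simpa [nonnegSet] using hfin) (fun z hz hz0 => ?_)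
    fun z hz hz0 => hhess z ⟨hK.subset hz, hz0⟩
  have hmin : IsLocalMin (fun x => eval x h) z := by
    filter_upwards [mem_interior_iff_mem_nhds.1 (hint ⟨hK.subset hz, hz0⟩)] with x hx
    exact hz0.trans_le (hnn x hx)
  exact eval_pderiv_eq_zero_of_isLocalMin hmin
end
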